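/- Fix K ≥ 1, n ∈ ℕ, and ε > 0. Then there exist m ∈ ℕ and a finite set I ⊆ [1, ∞] such that: for every Banach space X and every finite basic sequence (x₁, …, x_m) in X with basis constant at most K, there exist p ∈ I, indices 0 ≤ q₁ < q₂ < … < q_{n+1} ≤ m, and scalars (bᵢ) such that the block vectors yⱼ = Σ_{i=q_j+1}^{q_{j+1}} bᵢ xᵢ (1 ≤ j ≤ n) are (1+ε)-equivalent to the unit vector basis of ℓ_p^n. -/

import Mathlib

open scoped ENNReal

/-- The `ℓ_p^n` norm of the coefficient vector `c` (with the sup-norm convention for `p = ∞`). -/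
noncomputable def lpNorm {n : ℕ} (p : ℝ≥0∞) (c : Fin n → ℝ) : ℝ :=
  if p = ∞ then ⨆ i, |c i| else (∑ i, |c i| ^ p.toReal) ^ (1 / p.toReal)

namespace Krivine
open Filter Topology

theorem exists_ulim {α V : Type*} [AddCommGroup V] [Module ℝ V] (U : Ultrafilter α)
    (s : α → Seminorm ℝ V) (h : ∀ v, ∃ C, ∀ᶠ a in (U : Filter α), s a v ≤ C) :
    ∃ S : Seminorm ℝ V, ∀ v, Tendsto (fun a => s a v) (U : Filter α) (𝓝 (S v)) := by
  have key : ∀ v, ∃ L, Tendsto (fun a => s a v) (U : Filter α) (𝓝 L) := by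
    intro v
    obtain ⟨C, hC⟩ := h v
    have hc : IsCompact (Set.Icc (0 : ℝ) C) := isCompact_Icc
    have hle : ((U.map (fun a => s a v) : Ultrafilter ℝ) : Filter ℝ) ≤ 𝓟 (Set.Icc 0 C) := by
      rw [le_principal_iff]
      change ∀ᶠ a in (U : Filter α), s a v ∈ Set.Icc 0 C
      filter_upwards [hC] with a ha
      exact ⟨apply_nonneg _ _, ha⟩
    obtain ⟨L, -, hL⟩ := hc.ultrafilter_le_nhds _ hle
    exact ⟨L, hL⟩
  choose S hS using key
  refine ⟨Seminorm.of S ?_ ?_, hS⟩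
  · intro x y
    exact le_of_tendsto_of_tendsto' (hS (x + y)) ((hS x).add (hS y))
      (fun a => map_add_le_add (s a) x y)
  · intro t x
    refine tendsto_nhds_unique (hS (t • x)) ?_
    have := (hS x).const_mul ‖t‖
    refine this.congr (fun a => ?_)
    rw [map_smul_eq_mul]

/-- the ultralimit of a family of seminorms -/
noncomputable def ulim {α V : Type*} [AddCommGroup V] [Module ℝ V] (U : Ultrafilter α)
    (s : α → Seminorm ℝ V) : Seminorm ℝ V :=
  open Classical in
  if h : ∀ v, ∃ C, ∀ᶠ a in (U : Filter α), s a v ≤ C then (exists_ulim U s h).choose else 0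

theorem tendsto_ulim {α V : Type*} [AddCommGroup V] [Module ℝ V] (U : Ultrafilter α)
    (s : α → Seminorm ℝ V) (h : ∀ v, ∃ C, ∀ᶠ a in (U : Filter α), s a v ≤ C) (v : V) :
    Tendsto (fun a => s a v) (U : Filter α) (𝓝 (ulim U s v)) := by
  unfold ulim
  rw [dif_pos h]
  exact (exists_ulim U s h).choose_spec v

theorem seminorm_sum_le {ι V : Type*} [AddCommGroup V] [Module ℝ V] (M : Seminorm ℝ V)
    (s : Finset ι) (f : ι → V) : M (∑ i ∈ s, f i) ≤ ∑ i ∈ s, M (f i) := by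
  exact Finset.le_sum_of_subadditive M (map_zero M).le (map_add_le_add M) s f

theorem seminorm_fin_le {n : ℕ} (s : Seminorm ℝ (Fin n → ℝ)) (c : Fin n → ℝ) :
    s c ≤ (∑ j, s (Pi.single j 1)) * ‖c‖ := by
  have h : c = ∑ j, c j • (Pi.single j 1 : Fin n → ℝ) := by
    ext i
    simp [Finset.sum_apply, Pi.single_apply]
  conv_lhs => rw [h]
  refine (seminorm_sum_le _ _ _).trans ?_
  rw [Finset.sum_mul]
  refine Finset.sum_le_sum fun j _ => ?_
  rw [map_smul_eq_mul, mul_comm]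
  exact mul_le_mul_of_nonneg_left (norm_le_pi_norm c j) (apply_nonneg _ _)

theorem seminorm_abs_sub_le {V : Type*} [AddCommGroup V] [Module ℝ V] (s : Seminorm ℝ V)
    (x y : V) : |s x - s y| ≤ s (x - y) := abs_sub_map_le_sub s x y

theorem transfer {n : ℕ} {α : Type*} (U : Filter α) (s : α → Seminorm ℝ (Fin n → ℝ))
    (S : Seminorm ℝ (Fin n → ℝ)) (h : ∀ c, Tendsto (fun a => s a c) U (𝓝 (S c)))
    (η : ℝ) (hη : 0 < η) : ∀ᶠ a in U, ∀ c, |s a c - S c| ≤ η * ‖c‖ := by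
  set C : ℝ := ∑ j, S (Pi.single j 1) with hC
  have hC0 : 0 ≤ C := Finset.sum_nonneg fun _ _ => apply_nonneg _ _
  set r : ℝ := η / (2 * (2 * C + 2)) with hr
  have hr0 : 0 < r := by positivity
  have hcpt : IsCompact (Metric.sphere (0 : Fin n → ℝ) 1) := isCompact_sphere _ _
  obtain ⟨t, hts, htf, htc⟩ := hcpt.finite_cover_balls hr0
  have h1 : ∀ᶠ a in U, ∑ j, s a (Pi.single j 1) < C + 1 := by
    have : Tendsto (fun a => ∑ j, s a (Pi.single j 1)) U (𝓝 C) :=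
      tendsto_finsetSum _ fun j _ => h _
    exact this.eventually_lt_const (by linarith)
  have h2 : ∀ᶠ a in U, ∀ c ∈ t, |s a c - S c| < η / 2 := by
    rw [Filter.eventually_all_finite htf]
    intro c _
    have : Tendsto (fun a => |s a c - S c|) U (𝓝 |S c - S c|) :=
      ((h c).sub tendsto_const_nhds).abs
    exact this.eventually_lt_const (by simpa using half_pos hη)
  filter_upwards [h1, h2] with a ha1 ha2 c
  have hunit : ∀ c : Fin n → ℝ, ‖c‖ = 1 → |s a c - S c| ≤ η := by
    intro c hc
    have hc' : c ∈ Metric.sphere (0 : Fin n → ℝ) 1 := by simpa using hc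
    obtain ⟨d, hd, hcd⟩ := Set.mem_iUnion₂.1 (htc hc')
    rw [Metric.mem_ball, dist_eq_norm] at hcd
    have e1 : |s a c - s a d| ≤ (C + 1) * r := by
      refine (seminorm_abs_sub_le _ _ _).trans ((seminorm_fin_le _ _).trans ?_)
      exact mul_le_mul ha1.le hcd.le (norm_nonneg _) (by linarith)
    have e2 : |S c - S d| ≤ (C + 1) * r := by
      refine (seminorm_abs_sub_le _ _ _).trans ((seminorm_fin_le _ _).trans ?_)
      exact mul_le_mul (by linarith) hcd.le (norm_nonneg _) (by linarith)
    have e3 := ha2 d hd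
    have e4 : (C + 1) * r * 2 = η / 2 := by
      rw [hr]; field_simp
    rw [abs_le] at e1 e2 ⊢
    rw [abs_lt] at e3
    constructor <;> linarith [e1.1, e1.2, e2.1, e2.2, e3.1, e3.2]
  by_cases hc : ‖c‖ = 0
  · have : c = 0 := norm_eq_zero.1 hc
    subst this
    simp
  · have := hunit (‖c‖⁻¹ • c) (by rw [norm_smul, norm_inv, norm_norm, inv_mul_cancel₀ hc])
    have hp : 0 < ‖c‖ := lt_of_le_of_ne (norm_nonneg _) (Ne.symm hc)
    rw [map_smul_eq_mul, map_smul_eq_mul, ← mul_sub, abs_mul, norm_inv, norm_norm,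
      abs_of_pos (inv_pos.2 hp)] at this
    rwa [inv_mul_le_iff₀ hp, mul_comm] at this

end Krivine

namespace Krivine
open Filter Topology

/-- the `ℓ_{1/θ}` norm -/
noncomputable def ell {n : ℕ} (θ : ℝ) (c : Fin n → ℝ) : ℝ :=
  if θ = 0 then ‖c‖ else (∑ i, |c i| ^ (1 / θ)) ^ θ

theorem ell_zero {n : ℕ} (c : Fin n → ℝ) : ell 0 c = ‖c‖ := by simp [ell]

theorem ell_pos_def {n : ℕ} {θ : ℝ} (h : 0 < θ) (c : Fin n → ℝ) :
    ell θ c = (∑ i, |c i| ^ (1 / θ)) ^ θ := by simp [ell, h.ne']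

theorem ell_nonneg {n : ℕ} (θ : ℝ) (c : Fin n → ℝ) : 0 ≤ ell θ c := by
  unfold ell; split_ifs <;> positivity

theorem norm_le_ell {n : ℕ} {θ : ℝ} (h : 0 ≤ θ) (c : Fin n → ℝ) : ‖c‖ ≤ ell θ c := by
  rcases h.eq_or_lt with h | h
  · rw [← h, ell_zero]
  · rw [pi_norm_le_iff_of_nonneg (ell_nonneg _ _)]
    intro i
    rw [ell_pos_def h]
    have h1 : |c i| ^ (1 / θ) ≤ ∑ i, |c i| ^ (1 / θ) :=
      Finset.single_le_sum (f := fun i => |c i| ^ (1 / θ)) (fun _ _ => by positivity)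
        (Finset.mem_univ i)
    calc ‖c i‖ = (|c i| ^ (1 / θ)) ^ θ := by
          rw [← Real.rpow_mul (abs_nonneg _), one_div_mul_cancel h.ne', Real.rpow_one,
            Real.norm_eq_abs]
      _ ≤ _ := Real.rpow_le_rpow (by positivity) h1 h.le

theorem ell_smul {n : ℕ} {θ : ℝ} (h : 0 ≤ θ) (t : ℝ) (c : Fin n → ℝ) :
    ell θ (t • c) = |t| * ell θ c := by
  rcases h.eq_or_lt with h | h
  · rw [← h, ell_zero, ell_zero, norm_smul, Real.norm_eq_abs]
  · rw [ell_pos_def h, ell_pos_def h]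
    simp only [Pi.smul_apply, smul_eq_mul, abs_mul]
    have : ∀ i, (|t| * |c i|) ^ (1 / θ) = |t| ^ (1 / θ) * |c i| ^ (1 / θ) := fun i =>
      Real.mul_rpow (abs_nonneg _) (abs_nonneg _)
    simp only [this]
    rw [← Finset.mul_sum, Real.mul_rpow (by positivity) (by positivity),
      ← Real.rpow_mul (abs_nonneg _), one_div_mul_cancel h.ne', Real.rpow_one]

theorem ell_mono {n : ℕ} {θ' θ : ℝ} (h0 : 0 ≤ θ') (h : θ' ≤ θ) (c : Fin n → ℝ) :
    ell θ' c ≤ ell θ c := by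
  rcases h0.eq_or_lt with h0 | h0
  · rw [← h0, ell_zero]; exact norm_le_ell (by linarith) c
  have hθ : 0 < θ := by linarith
  by_cases hc : ell θ' c = 0
  · rw [hc]; exact ell_nonneg _ _
  have hcp : 0 < ell θ' c := lt_of_le_of_ne (ell_nonneg _ _) (Ne.symm hc)
  -- normalise
  have key : ∀ c : Fin n → ℝ, ell θ' c = 1 → 1 ≤ ell θ c := by
    intro c hc1
    have hle : ∀ i, |c i| ≤ 1 := fun i => by
      have := (norm_le_pi_norm c i).trans (norm_le_ell h0.le c)
      rwa [hc1] at this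
    rw [ell_pos_def h0] at hc1
    have hs : ∑ i, |c i| ^ (1 / θ') = 1 := by
      have h2 : ((∑ i, |c i| ^ (1 / θ')) ^ θ') ^ (1 / θ') = 1 := by rw [hc1, Real.one_rpow]
      rwa [← Real.rpow_mul (Finset.sum_nonneg fun _ _ => by positivity),
        mul_one_div_cancel h0.ne', Real.rpow_one] at h2
    rw [ell_pos_def hθ]
    apply Real.one_le_rpow _ hθ.le
    refine hs.symm.le.trans ?_
    refine Finset.sum_le_sum fun i _ => ?_
    by_cases hci : |c i| = 0
    · rw [hci, Real.zero_rpow (by positivity), Real.zero_rpow (by positivity)]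
    · exact Real.rpow_le_rpow_of_exponent_ge (lt_of_le_of_ne (abs_nonneg _) (Ne.symm hci))
        (hle i) (one_div_le_one_div_of_le h0 h)
  have := key ((ell θ' c)⁻¹ • c) (by
    rw [ell_smul h0.le, abs_of_pos (inv_pos.2 hcp), inv_mul_cancel₀ hc])
  rw [ell_smul hθ.le, abs_of_pos (inv_pos.2 hcp)] at this
  rwa [← div_eq_inv_mul, one_le_div hcp] at this

theorem ell_le {n : ℕ} {θ' θ : ℝ} (h0 : 0 ≤ θ') (h : θ' ≤ θ) (c : Fin n → ℝ) :
    ell θ c ≤ (n : ℝ) ^ (θ - θ') * ell θ' c := by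
  rcases (h0.trans h).eq_or_lt with hθ | hθ
  · have : θ' = 0 := by linarith
    subst this
    rw [← hθ]; simp
  rcases Nat.eq_zero_or_pos n with hn | hn
  · subst hn
    rw [ell_pos_def hθ]
    simp only [Finset.univ_eq_empty, Finset.sum_empty]
    rw [Real.zero_rpow hθ.ne']
    have := ell_nonneg θ' c
    positivity
  have hn' : (0 : ℝ) < n := by exact_mod_cast hn
  rcases h0.eq_or_lt with h0 | h0
  · rw [← h0, ell_zero, sub_zero, ell_pos_def hθ]
    have : ∑ i, |c i| ^ (1 / θ) ≤ n * ‖c‖ ^ (1 / θ) := by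
      calc _ ≤ ∑ i : Fin n, ‖c‖ ^ (1 / θ) := Finset.sum_le_sum fun i _ =>
            Real.rpow_le_rpow (abs_nonneg _) (norm_le_pi_norm c i) (by positivity)
        _ = _ := by simp
    calc _ ≤ (n * ‖c‖ ^ (1 / θ)) ^ θ :=
          Real.rpow_le_rpow (Finset.sum_nonneg fun _ _ => by positivity) this hθ.le
      _ = _ := by
          rw [Real.mul_rpow hn'.le (by positivity), ← Real.rpow_mul (norm_nonneg _),
            one_div_mul_cancel hθ.ne', Real.rpow_one]
  · rw [ell_pos_def hθ, ell_pos_def h0]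
    set a : ℝ := θ / θ' with ha
    have ha1 : 1 ≤ a := by rw [ha, one_le_div h0]; exact h
    have hpm := Real.rpow_arith_mean_le_arith_mean_rpow Finset.univ (fun _ : Fin n => (n : ℝ)⁻¹)
      (fun i => |c i| ^ (1 / θ)) (fun _ _ => by positivity) (by simp [hn'.ne'])
      (fun _ _ => by positivity) ha1
    have e1 : ∀ i, (|c i| ^ (1 / θ)) ^ a = |c i| ^ (1 / θ') := by
      intro i
      rw [← Real.rpow_mul (abs_nonneg _), ha]
      congr 1; field_simp
    simp only [e1] at hpm
    rw [← Finset.mul_sum, ← Finset.mul_sum] at hpm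
    set A := ∑ i, |c i| ^ (1 / θ) with hA
    set B := ∑ i, |c i| ^ (1 / θ') with hB
    have hA0 : 0 ≤ A := Finset.sum_nonneg fun _ _ => by positivity
    have hB0 : 0 ≤ B := Finset.sum_nonneg fun _ _ => by positivity
    have h3 := Real.rpow_le_rpow (by positivity) hpm h0.le
    rw [← Real.rpow_mul (by positivity), ha, div_mul_cancel₀ _ h0.ne',
      Real.mul_rpow (by positivity) hA0, Real.mul_rpow (by positivity) hB0,
      Real.inv_rpow hn'.le, Real.inv_rpow hn'.le] at h3
    rw [Real.rpow_sub hn']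
    have p1 : 0 < (n : ℝ) ^ θ := by positivity
    have p2 : 0 < (n : ℝ) ^ θ' := by positivity
    rw [inv_mul_le_iff₀ p1] at h3
    calc A ^ θ ≤ _ := h3
      _ = _ := by field_simp

/-- the exponent corresponding to `θ` -/
noncomputable def expo (θ : ℝ) : ℝ≥0∞ := if θ = 0 then ∞ else ENNReal.ofReal (1 / θ)

theorem one_le_expo {θ : ℝ} (h0 : 0 ≤ θ) (h1 : θ ≤ 1) : 1 ≤ expo θ := by
  unfold expo
  split_ifs with h
  · exact le_top
  · have : 0 < θ := lt_of_le_of_ne h0 (Ne.symm h)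
    rw [ENNReal.one_le_ofReal]
    exact one_le_one_div this h1

theorem lpNorm_expo {n : ℕ} {θ : ℝ} (h0 : 0 ≤ θ) (c : Fin n → ℝ) :
    lpNorm (expo θ) c = ell θ c := by
  rcases h0.eq_or_lt with h | h
  · subst h
    simp only [lpNorm, expo, ell, if_true]
    rcases Nat.eq_zero_or_pos n with hn | hn
    · subst hn
      have hc : c = 0 := Subsingleton.elim _ _
      rw [hc, norm_zero]
      exact Real.iSup_of_isEmpty _
    · have : Nonempty (Fin n) := ⟨⟨0, hn⟩⟩
      apply le_antisymm
      · exact ciSup_le fun i => norm_le_pi_norm c i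
      · rw [pi_norm_le_iff_of_nonempty]
        intro i
        exact le_ciSup (f := fun i => |c i|) (Set.finite_range _).bddAbove i
  · have h2 : expo θ = ENNReal.ofReal (1 / θ) := by simp [expo, h.ne']
    rw [h2, lpNorm, if_neg ENNReal.ofReal_ne_top, ENNReal.toReal_ofReal (by positivity),
      ell_pos_def h, one_div_one_div]

theorem exists_net (n : ℕ) (η : ℝ) (hη : 0 < η) : ∃ T : Finset ℝ, (∀ θ ∈ T, 0 ≤ θ ∧ θ ≤ 1) ∧
    ∀ θ : ℝ, 0 ≤ θ → θ ≤ 1 → ∃ θ' ∈ T, ∀ c : Fin n → ℝ,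
      ell θ' c ≤ ell θ c ∧ ell θ c ≤ (1 + η) * ell θ' c := by
  obtain ⟨D, hD0, hD⟩ : ∃ D : ℕ, 0 < D ∧ ((n : ℝ) + 1) ^ (1 / (D : ℝ)) ≤ 1 + η := by
    have h1 : Tendsto (fun D : ℕ => ((n : ℝ) + 1) ^ (1 / (D : ℝ))) atTop (𝓝 1) := by
      have : Tendsto (fun D : ℕ => 1 / (D : ℝ)) atTop (𝓝 0) := tendsto_one_div_atTop_nhds_zero_nat
      have h2 := (Real.continuousAt_const_rpow (a := (n : ℝ) + 1) (b := 0) (by positivity)).tendsto.comp this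
      simpa [Function.comp_def] using h2
    have h3 := (h1.eventually_lt_const (show (1 : ℝ) < 1 + η by linarith)).and
      (eventually_gt_atTop 0)
    obtain ⟨D, hD1, hD2⟩ := h3.exists
    exact ⟨D, hD2, hD1.le⟩
  have hDr : (0 : ℝ) < D := by exact_mod_cast hD0
  refine ⟨(Finset.range (D + 1)).image fun i : ℕ => (i : ℝ) / D, ?_, ?_⟩
  · intro θ hθ
    obtain ⟨i, hi, rfl⟩ := Finset.mem_image.1 hθ
    refine ⟨by positivity, ?_⟩
    rw [div_le_one hDr]
    have := Finset.mem_range.1 hi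
    exact_mod_cast Nat.lt_succ_iff.1 this
  · intro θ h0 h1
    have hfl : (⌊θ * D⌋₊ : ℝ) ≤ θ * D := Nat.floor_le (by positivity)
    have hfl2 : θ * D < ⌊θ * D⌋₊ + 1 := Nat.lt_floor_add_one _
    have ha : (⌊θ * D⌋₊ : ℝ) / D ≤ θ := by rw [div_le_iff₀ hDr]; exact hfl
    have hb : θ - (⌊θ * D⌋₊ : ℝ) / D ≤ 1 / D := by
      rw [sub_le_iff_le_add, ← add_div, le_div_iff₀ hDr]; linarith
    refine ⟨(⌊θ * D⌋₊ : ℝ) / D, ?_, ?_⟩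
    · refine Finset.mem_image.2 ⟨_, ?_, rfl⟩
      rw [Finset.mem_range, Nat.lt_succ_iff]
      have : (⌊θ * D⌋₊ : ℝ) ≤ D := hfl.trans (by nlinarith)
      exact_mod_cast this
    · intro c
      refine ⟨ell_mono (by positivity) ha c, (ell_le (by positivity) ha c).trans ?_⟩
      refine mul_le_mul_of_nonneg_right ?_ (ell_nonneg _ _)
      refine le_trans ?_ hD
      calc (n : ℝ) ^ (θ - (⌊θ * D⌋₊ : ℝ) / D) ≤ ((n : ℝ) + 1) ^ (θ - (⌊θ * D⌋₊ : ℝ) / D) :=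
            Real.rpow_le_rpow (by positivity) (by linarith) (by linarith)
        _ ≤ _ := Real.rpow_le_rpow_of_exponent_le (by linarith [(Nat.cast_nonneg n : (0:ℝ) ≤ n)]) hb

end Krivine

namespace Krivine
open Filter Topology

/-- spreading seminorms -/
def Spr (M : Seminorm ℝ (ℚ →₀ ℝ)) : Prop :=
  ∀ (f : ℚ →₀ ℝ) (g : ℚ → ℚ), StrictMonoOn g (f.support : Set ℚ) → M (f.mapDomain g) = M f

/-- successive blocks -/
def Succ {ι : Type*} [LinearOrder ι] {n : ℕ} (y : Fin n → (ι →₀ ℝ)) : Prop :=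
  ∀ j j', j < j' → ∀ a ∈ (y j).support, ∀ b ∈ (y j').support, a < b

/-- `ℓ_{1/θ}` is block finitely representable in the seminorm `M` -/
def Kr {ι : Type*} [LinearOrder ι] (M : Seminorm ℝ (ι →₀ ℝ)) (θ : ℝ) : Prop :=
  ∀ (n : ℕ) (η : ℝ), 0 < η → ∃ y : Fin n → (ι →₀ ℝ), Succ y ∧
    ∀ c : Fin n → ℝ, |M (∑ j, c j • y j) - ell θ c| ≤ η * ell θ c

/-- combinations of `y` as a seminorm on coefficient vectors -/
noncomputable def coef {ι : Type*} {n : ℕ} (M : Seminorm ℝ (ι →₀ ℝ)) (y : Fin n → (ι →₀ ℝ)) :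
    Seminorm ℝ (Fin n → ℝ) := M.comp (Fintype.linearCombination ℝ y)

theorem coef_apply {ι : Type*} {n : ℕ} (M : Seminorm ℝ (ι →₀ ℝ)) (y : Fin n → (ι →₀ ℝ))
    (c : Fin n → ℝ) : coef M y c = M (∑ j, c j • y j) := by
  simp [coef, Fintype.linearCombination_apply]

/-- transfer of representability through limits of block maps -/
theorem Kr_transfer {ι κ α : Type*} [LinearOrder ι] [LinearOrder κ]
    (M : Seminorm ℝ (ι →₀ ℝ)) {θ : ℝ} (hθ : 0 ≤ θ) (hM : Kr M θ) (n : ℕ) (η : ℝ) (hη : 0 < η)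
    (N : α → Seminorm ℝ (κ →₀ ℝ)) :
    ∃ y : Fin n → (ι →₀ ℝ), Succ y ∧
    ∀ (W : Filter α) (Φ : α → (ι →₀ ℝ) →ₗ[ℝ] (κ →₀ ℝ)),
    (∀ c : Fin n → ℝ, Tendsto (fun a => N a (Φ a (∑ j, c j • y j))) W (𝓝 (M (∑ j, c j • y j)))) →
    ∀ᶠ a in W, ∀ c : Fin n → ℝ,
      |N a (∑ j, c j • Φ a (y j)) - ell θ c| ≤ η * ell θ c := by
  obtain ⟨y, hy, hyc⟩ := hM n (η / 2) (half_pos hη)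
  refine ⟨y, hy, fun W Φ h => ?_⟩
  have hΦ : ∀ a (c : Fin n → ℝ), Φ a (∑ j, c j • y j) = ∑ j, c j • Φ a (y j) := by
    intro a c; simp
  have := transfer W (fun a => coef (N a) (fun j => Φ a (y j))) (coef M y) (by
    intro c
    simp only [coef_apply]
    simpa only [hΦ] using h c) (η / 2) (half_pos hη)
  filter_upwards [this] with a ha c
  have h1 := ha c
  have h2 := hyc c
  rw [coef_apply, coef_apply] at h1
  have h3 : η / 2 * ‖c‖ ≤ η / 2 * ell θ c :=
    mul_le_mul_of_nonneg_left (norm_le_ell hθ c) (half_pos hη).le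
  rw [abs_le] at h1 h2 ⊢
  constructor <;> linarith [h1.1, h1.2, h2.1, h2.2]

/-! ### the spreading model -/

/-- replace coordinate `r` by a copy at position `i` -/
noncomputable def push (r : ℚ) (i : ℕ) : ((ℚ →₀ ℝ) × (ℕ →₀ ℝ)) →ₗ[ℝ] ((ℚ →₀ ℝ) × (ℕ →₀ ℝ)) :=
  LinearMap.prod (LinearMap.fst ℝ _ _)
    (LinearMap.snd ℝ _ _ + (Finsupp.lsingle i).comp ((Finsupp.lapply r).comp (LinearMap.fst ℝ _ _)))

theorem push_apply (r : ℚ) (i : ℕ) (f : ℚ →₀ ℝ) (v : ℕ →₀ ℝ) :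
    push r i (f, v) = (f, v + Finsupp.single i (f r)) := by
  simp [push]

/-- iterated limits -/
noncomputable def itLim (U : Ultrafilter ℕ) (N : Seminorm ℝ (ℕ →₀ ℝ)) :
    List ℚ → Seminorm ℝ ((ℚ →₀ ℝ) × (ℕ →₀ ℝ))
  | [] => N.comp (LinearMap.snd ℝ (ℚ →₀ ℝ) (ℕ →₀ ℝ))
  | r :: s => ulim U (fun i => (itLim U N s).comp (push r i))

theorem N_single (N : Seminorm ℝ (ℕ →₀ ℝ))
    (hN : ∀ i, N (Finsupp.single i 1) = 1) (i : ℕ) (a : ℝ) : N (Finsupp.single i a) = |a| := by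
  have : Finsupp.single i a = a • Finsupp.single i (1 : ℝ) := by simp
  rw [this, map_smul_eq_mul, hN, mul_one, Real.norm_eq_abs]

theorem itLim_aux (U : Ultrafilter ℕ) (N : Seminorm ℝ (ℕ →₀ ℝ))
    (hN : ∀ i, N (Finsupp.single i 1) = 1) (s : List ℚ) :
    (∀ f v, itLim U N s (f, v) ≤ N v + (s.map fun r => |f r|).sum) ∧
    ∀ r f v, Tendsto (fun i => itLim U N s (f, v + Finsupp.single i (f r))) (U : Filter ℕ)
      (𝓝 (itLim U N (r :: s) (f, v))) := by
  have step : ∀ s : List ℚ, (∀ f v, itLim U N s (f, v) ≤ N v + (s.map fun r => |f r|).sum) →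
    ∀ r f v, Tendsto (fun i => itLim U N s (f, v + Finsupp.single i (f r))) (U : Filter ℕ)
      (𝓝 (itLim U N (r :: s) (f, v))) := by
    intro s hs r f v
    have := tendsto_ulim U (fun i => (itLim U N s).comp (push r i)) (by
      rintro ⟨f, v⟩
      refine ⟨N v + |f r| + (s.map fun r => |f r|).sum, Eventually.of_forall fun i => ?_⟩
      rw [Seminorm.comp_apply, push_apply]
      refine (hs _ _).trans ?_
      have := map_add_le_add N v (Finsupp.single i (f r))
      rw [N_single N hN] at this
      linarith) (f, v)
    simpa [Seminorm.comp_apply, push_apply, itLim] using this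
  induction s with
  | nil =>
    have : ∀ f v, itLim U N [] (f, v) ≤ N v + (([] : List ℚ).map fun r => |f r|).sum := by
      intro f v; simp [itLim]
    exact ⟨this, step _ this⟩
  | cons r s ih =>
    have : ∀ f v, itLim U N (r :: s) (f, v) ≤ N v + ((r :: s).map fun r => |f r|).sum := by
      intro f v
      refine le_of_tendsto (ih.2 r f v) (Eventually.of_forall fun i => ?_)
      refine (ih.1 _ _).trans ?_
      have := map_add_le_add N v (Finsupp.single i (f r))
      rw [N_single N hN] at this
      simp only [List.map_cons, List.sum_cons]
      linarith
    exact ⟨this, step _ this⟩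

theorem itLim_zero (U : Ultrafilter ℕ) (N : Seminorm ℝ (ℕ →₀ ℝ))
    (hN : ∀ i, N (Finsupp.single i 1) = 1) (r : ℚ) (s : List ℚ) (f : ℚ →₀ ℝ) (v : ℕ →₀ ℝ) (h : f r = 0) :
    itLim U N (r :: s) (f, v) = itLim U N s (f, v) := by
  have := (itLim_aux U N hN s).2 r f v
  simp only [h, Finsupp.single_zero, add_zero] at this
  exact tendsto_nhds_unique this tendsto_const_nhds

theorem itLim_filter (U : Ultrafilter ℕ) (N : Seminorm ℝ (ℕ →₀ ℝ))
    (hN : ∀ i, N (Finsupp.single i 1) = 1) (s : List ℚ) (f : ℚ →₀ ℝ) (v : ℕ →₀ ℝ) :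
    itLim U N (s.filter fun r => f r ≠ 0) (f, v) = itLim U N s (f, v) := by
  induction s generalizing v with
  | nil => simp
  | cons r s ih =>
    by_cases h : f r = 0
    · rw [itLim_zero U N hN r s f v h, List.filter_cons_of_neg (by simpa using h), ih]
    · rw [List.filter_cons_of_pos (by simpa using h)]
      refine tendsto_nhds_unique ((itLim_aux U N hN _).2 r f v) ?_
      simp only [ih]
      exact (itLim_aux U N hN _).2 r f v

theorem itLim_map (U : Ultrafilter ℕ) (N : Seminorm ℝ (ℕ →₀ ℝ))
    (hN : ∀ i, N (Finsupp.single i 1) = 1) (s : List ℚ) (f f' : ℚ →₀ ℝ) (g : ℚ → ℚ) (h : ∀ r ∈ s, f' (g r) = f r)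
    (v : ℕ →₀ ℝ) : itLim U N (s.map g) (f', v) = itLim U N s (f, v) := by
  induction s generalizing v with
  | nil => simp [itLim]
  | cons r s ih =>
    rw [List.map_cons]
    refine tendsto_nhds_unique ((itLim_aux U N hN _).2 (g r) f' v) ?_
    simp only [ih (fun r hr => h r (List.mem_cons_of_mem _ hr)), h r (List.mem_cons_self)]
    exact (itLim_aux U N hN _).2 r f v

/-- the value of the spreading model -/
noncomputable def sprVal (U : Ultrafilter ℕ) (N : Seminorm ℝ (ℕ →₀ ℝ)) (f : ℚ →₀ ℝ) : ℝ := itLim U N (f.support.sort (· ≤ ·)) (f, 0)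

theorem sprVal_eq (U : Ultrafilter ℕ) (N : Seminorm ℝ (ℕ →₀ ℝ))
    (hN : ∀ i, N (Finsupp.single i 1) = 1) (f : ℚ →₀ ℝ) (s : Finset ℚ) (h : f.support ⊆ s) :
    sprVal U N f = itLim U N (s.sort (· ≤ ·)) (f, 0) := by
  rw [sprVal, ← itLim_filter U N hN (s.sort (· ≤ ·))]
  congr 2
  refine List.Perm.eq_of_pairwise (le := (· ≤ ·)) ?_ ?_ ?_ ?_
  · intro a b _ _ h1 h2; exact le_antisymm h1 h2
  · exact Finset.pairwise_sort _ _
  · exact (Finset.pairwise_sort _ _).filter _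
  · rw [List.perm_ext_iff_of_nodup (Finset.sort_nodup _ _) ((Finset.sort_nodup _ _).filter _)]
    intro a
    simp only [Finset.mem_sort, List.mem_filter, Finsupp.mem_support_iff, decide_eq_true_eq]
    constructor
    · intro ha; exact ⟨h (by simpa using ha), ha⟩
    · exact fun ha => ha.2

theorem exists_spr (U : Ultrafilter ℕ) (N : Seminorm ℝ (ℕ →₀ ℝ))
    (hN : ∀ i, N (Finsupp.single i 1) = 1) : ∃ F : Seminorm ℝ (ℚ →₀ ℝ), Spr F ∧ ∀ (f : ℚ →₀ ℝ) (s : Finset ℚ),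
    f.support ⊆ s → F f = itLim U N (s.sort (· ≤ ·)) (f, 0) := by
  refine ⟨Seminorm.of (sprVal U N) ?_ ?_, ?_, ?_⟩
  · intro f g
    have h1 : f.support ⊆ f.support ∪ g.support ∪ (f + g).support := fun a ha => by
      simp only [Finset.mem_union]; tauto
    have h2 : g.support ⊆ f.support ∪ g.support ∪ (f + g).support := fun a ha => by
      simp only [Finset.mem_union]; tauto
    have h3 : (f + g).support ⊆ f.support ∪ g.support ∪ (f + g).support := fun a ha => by
      simp only [Finset.mem_union]; tauto
    rw [sprVal_eq U N hN f _ h1, sprVal_eq U N hN g _ h2, sprVal_eq U N hN (f + g) _ h3]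
    have : ((f + g, 0) : (ℚ →₀ ℝ) × (ℕ →₀ ℝ)) = (f, 0) + (g, 0) := by simp
    rw [this]
    exact map_add_le_add _ _ _
  · intro t f
    rw [sprVal_eq U N hN (t • f) f.support (Finsupp.support_smul), sprVal]
    have : ((t • f, 0) : (ℚ →₀ ℝ) × (ℕ →₀ ℝ)) = t • (f, 0) := by simp
    rw [this, map_smul_eq_mul]
  · intro f g hg
    change sprVal U N _ = sprVal U N f
    classical
    rw [sprVal_eq U N hN (f.mapDomain g) (f.support.image g) Finsupp.mapDomain_support, sprVal]
    rw [← itLim_map U N hN (f.support.sort (· ≤ ·)) f (f.mapDomain g) g]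
    · congr 1
      refine congrArg _ ?_
      refine List.Perm.eq_of_pairwise (le := (· ≤ ·)) ?_ ?_ ?_ ?_
      · intro a b _ _ h1 h2; exact le_antisymm h1 h2
      · exact Finset.pairwise_sort _ _
      · rw [List.pairwise_map]
        refine (Finset.pairwise_sort f.support (· ≤ ·)).imp_of_mem ?_
        intro a b ha hb hab
        exact hg.monotoneOn (by simpa using ha) (by simpa using hb) hab
      · rw [List.perm_ext_iff_of_nodup (Finset.sort_nodup _ _)]
        · intro a; simp
        · refine List.Nodup.map_on ?_ (Finset.sort_nodup _ _)
          intro a ha b hb hab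
          exact hg.injOn (by simpa using ha) (by simpa using hb) hab
    · intro r hr
      exact Finsupp.mapDomain_apply' (↑f.support) f subset_rfl hg.injOn (by simpa using hr)
  · intro f s hs
    exact sprVal_eq U N hN f s hs

end Krivine

namespace Krivine
open Filter Topology

/-- the filter of position maps -/
noncomputable def posFil (U : Ultrafilter ℕ) : List ℚ → Filter (ℚ → ℕ)
  | [] => pure (fun _ => 0)
  | r :: s => Filter.bind (U : Filter ℕ) (fun i => (posFil U s).map (fun g => Function.update g r i))

theorem posFil_neBot (U : Ultrafilter ℕ) (s : List ℚ) : (posFil U s).NeBot := by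
  induction s with
  | nil => exact Filter.pure_neBot
  | cons r s ih =>
    rw [posFil, Filter.neBot_iff, Ne, ← Filter.eventually_false_iff_eq_bot, Filter.eventually_bind]
    intro h
    obtain ⟨i, hi⟩ := h.exists
    rw [Filter.eventually_map] at hi
    obtain ⟨_, h'⟩ := hi.exists
    exact h'

theorem posFil_tendsto (U : Ultrafilter ℕ) (N : Seminorm ℝ (ℕ →₀ ℝ))
    (hN : ∀ i, N (Finsupp.single i 1) = 1) (s : List ℚ) (hs : s.Nodup) (f : ℚ →₀ ℝ)
    (v : ℕ →₀ ℝ) :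
    Tendsto (fun g : ℚ → ℕ => N (v + (s.map fun r => Finsupp.single (g r) (f r)).sum))
      (posFil U s) (𝓝 (itLim U N s (f, v))) := by
  induction s generalizing v with
  | nil =>
    simp only [posFil, List.map_nil, List.sum_nil, add_zero, itLim, Seminorm.comp_apply,
      LinearMap.snd_apply]
    exact tendsto_const_nhds
  | cons r s ih =>
    rw [List.nodup_cons] at hs
    rw [tendsto_nhds]
    intro O hO hmem
    have h1 := (itLim_aux U N hN s).2 r f v (hO.mem_nhds hmem)
    change ∀ᶠ g in posFil U (r :: s), _ ∈ O
    rw [posFil, Filter.eventually_bind]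
    filter_upwards [h1] with i hi
    have h2 := ih hs.2 (v + Finsupp.single i (f r)) (hO.mem_nhds hi)
    rw [Filter.eventually_map]
    filter_upwards [h2] with g hg
    have h3 : (s.map fun r' => Finsupp.single (Function.update g r i r') (f r'))
        = s.map fun r' => Finsupp.single (g r') (f r') := by
      refine List.map_congr_left fun r' hr' => ?_
      rw [Function.update_of_ne]
      rintro rfl; exact hs.1 hr'
    rw [List.map_cons, List.sum_cons, Function.update_self, h3, ← add_assoc]
    exact hg

theorem posFil_mono (s : List ℚ) (hs : s.Pairwise (· < ·)) (b : ℕ) :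
    ∀ᶠ g in posFil (hyperfilter ℕ) s, (∀ r ∈ s, b ≤ g r) ∧ StrictMonoOn g {r | r ∈ s} := by
  induction s generalizing b with
  | nil => exact Eventually.of_forall fun g => by simp [StrictMonoOn]
  | cons r s ih =>
    rw [List.pairwise_cons] at hs
    rw [posFil, Filter.eventually_bind]
    have h1 : ∀ᶠ i in (hyperfilter ℕ : Filter ℕ), b ≤ i := by
      have : ∀ᶠ i in (atTop : Filter ℕ), b ≤ i := eventually_ge_atTop b
      exact Nat.hyperfilter_le_atTop this
    filter_upwards [h1] with i hi
    rw [Filter.eventually_map]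
    filter_upwards [ih hs.2 (i + 1)] with g hg
    have hne : ∀ r' ∈ s, Function.update g r i r' = g r' := fun r' hr' =>
      Function.update_of_ne (hs.1 r' hr').ne' _ _
    constructor
    · intro r' hr'
      rcases List.mem_cons.1 hr' with rfl | hr'
      · simpa using hi
      · rw [hne r' hr']; have := hg.1 r' hr'; omega
    · intro a ha c hc hac
      rcases List.mem_cons.1 ha with ha' | ha' <;> rcases List.mem_cons.1 hc with hc' | hc'
      · rw [ha', hc'] at hac; exact absurd hac (lt_irrefl _)
      · rw [hne c hc', ha', Function.update_self]; have := hg.1 c hc'; omega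
      · rw [hc'] at hac; exact absurd hac (hs.1 a ha').not_gt
      · rw [hne c hc', hne a ha']; exact hg.2 ha' hc' hac

theorem spr_step (N : Seminorm ℝ (ℕ →₀ ℝ)) (hN : ∀ i, N (Finsupp.single i 1) = 1)
    (K : ℝ) (hK : 1 ≤ K)
    (hd : ∀ i j, i < j → 1 ≤ K * N (Finsupp.single i 1 - Finsupp.single j 1)) :
    ∃ F : Seminorm ℝ (ℚ →₀ ℝ), Spr F ∧ 0 < F (Finsupp.single 0 1 - Finsupp.single 1 1) ∧
      ∀ θ, 0 ≤ θ → Kr F θ → Kr N θ := by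
  obtain ⟨F, hF, hFe⟩ := exists_spr (hyperfilter ℕ) N hN
  have tend : ∀ (f : ℚ →₀ ℝ) (s : Finset ℚ), f.support ⊆ s →
      Tendsto (fun g : ℚ → ℕ => N (f.mapDomain g)) (posFil (hyperfilter ℕ) (s.sort (· ≤ ·)))
        (𝓝 (F f)) := by
    intro f s hs
    rw [hFe f s hs]
    have := posFil_tendsto (hyperfilter ℕ) N hN (s.sort (· ≤ ·)) (Finset.sort_nodup _ _) f 0
    refine this.congr fun g => ?_
    congr 1
    rw [zero_add, Finsupp.mapDomain, Finsupp.sum_of_support_subset f hs _ (by simp)]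
    conv_rhs => rw [← Finset.sort_toFinset s (· ≤ ·)]
    rw [List.sum_toFinset _ (Finset.sort_nodup _ _)]
  have mono : ∀ s : Finset ℚ, ∀ᶠ g in posFil (hyperfilter ℕ) (s.sort (· ≤ ·)),
      StrictMonoOn g (s : Set ℚ) := by
    intro s
    filter_upwards [posFil_mono (s.sort (· ≤ ·)) (Finset.sortedLT_sort s).pairwise 0] with g hg
    convert hg.2 using 1
    ext r; simp
  refine ⟨F, hF, ?_, ?_⟩
  · have hpos : 0 < K⁻¹ := by positivity
    refine lt_of_lt_of_le hpos ?_
    have := posFil_neBot (hyperfilter ℕ) ((({0, 1} : Finset ℚ)).sort (· ≤ ·))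
    refine ge_of_tendsto (tend _ {0, 1} ?_) ?_
    · refine (Finsupp.support_sub).trans (Finset.union_subset ?_ ?_)
      · exact (Finsupp.support_single_subset).trans (by simp)
      · exact (Finsupp.support_single_subset).trans (by simp)
    · filter_upwards [mono {0, 1}] with g hg
      have h01 : g 0 < g 1 := hg (by simp) (by simp) zero_lt_one
      rw [sub_eq_add_neg, Finsupp.mapDomain_add, ← Finsupp.single_neg, Finsupp.mapDomain_single,
        Finsupp.mapDomain_single, Finsupp.single_neg, ← sub_eq_add_neg]
      have := hd _ _ h01
      rw [inv_le_iff_one_le_mul₀ (by positivity), mul_comm]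
      exact this
  · intro θ hθ hKr n η hη
    obtain ⟨y, hy, hyc⟩ := Kr_transfer F hθ hKr n η hη (fun _ : ℚ → ℕ => N)
    classical
    set s : Finset ℚ := Finset.univ.biUnion fun j => (y j).support with hs
    have hsub : ∀ c : Fin n → ℝ, (∑ j, c j • y j).support ⊆ s := by
      intro c
      refine (Finsupp.support_finsetSum).trans ?_
      refine Finset.biUnion_mono fun j _ => Finsupp.support_smul
    have hsj : ∀ j, (y j).support ⊆ s := fun j =>
      Finset.subset_biUnion_of_mem (fun j => (y j).support) (Finset.mem_univ j)
    have := posFil_neBot (hyperfilter ℕ) (s.sort (· ≤ ·))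
    have h1 := hyc (posFil (hyperfilter ℕ) (s.sort (· ≤ ·)))
      (fun g => Finsupp.lmapDomain ℝ ℝ g) (fun c => tend _ s (hsub c))
    obtain ⟨g, hg1, hg2⟩ := (h1.and (mono s)).exists
    refine ⟨fun j => (y j).mapDomain g, ?_, hg1⟩
    intro j j' hjj a ha b hb
    obtain ⟨a', ha', rfl⟩ := Finset.mem_image.1 (Finsupp.mapDomain_support ha)
    obtain ⟨b', hb', rfl⟩ := Finset.mem_image.1 (Finsupp.mapDomain_support hb)
    exact hg2 (hsj j ha') (hsj j' hb') (hy j j' hjj _ ha' _ hb')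

end Krivine

namespace Krivine
open Filter Topology

theorem spr2 {M : Seminorm ℝ (ℚ →₀ ℝ)} (hM : Spr M) {ι : Type*} (f : ι →₀ ℝ) (u v : ι → ℚ)
    (h : ∀ a ∈ f.support, ∀ b ∈ f.support, u a < u b → v a < v b)
    (h' : ∀ a ∈ f.support, ∀ b ∈ f.support, u a = u b → v a = v b) :
    M (f.mapDomain u) = M (f.mapDomain v) := by
  classical
  rcases isEmpty_or_nonempty ι with hι | hι
  · have : f = 0 := Subsingleton.elim _ _
    simp [this]
  set g : ℚ → ℚ := fun q => v (Function.invFunOn u (f.support : Set ι) q) with hg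
  have hinv : ∀ a ∈ f.support, Function.invFunOn u (f.support : Set ι) (u a) ∈ f.support ∧
      u (Function.invFunOn u (f.support : Set ι) (u a)) = u a := fun a ha =>
    Function.invFunOn_pos ⟨a, ha, rfl⟩
  have hgu : ∀ a ∈ f.support, g (u a) = v a := fun a ha =>
    h' _ (hinv a ha).1 a ha (hinv a ha).2
  have h1 : f.mapDomain v = (f.mapDomain u).mapDomain g := by
    rw [← Finsupp.mapDomain_comp]
    exact Finsupp.mapDomain_congr fun a ha => (hgu a ha).symm
  rw [h1, hM]
  intro x hx y hy hxy
  obtain ⟨a, ha, rfl⟩ := Finset.mem_image.1 (Finsupp.mapDomain_support hx)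
  obtain ⟨b, hb, rfl⟩ := Finset.mem_image.1 (Finsupp.mapDomain_support hy)
  rw [hgu a ha, hgu b hb]
  exact h a ha b hb hxy

theorem mono_of_step {ι : Type*} (M : Seminorm ℝ (ι →₀ ℝ)) (R : ℝ → ℝ → Prop) (hR : ∀ a, R a a)
    (h : ∀ (r : ι) (f' : ι →₀ ℝ) (a b : ℝ), f' r = 0 → R a b →
      M (Finsupp.single r a + f') ≤ M (Finsupp.single r b + f'))
    (f g : ι →₀ ℝ) (hfg : ∀ r, R (f r) (g r)) : M f ≤ M g := by
  classical
  have key : ∀ s : Finset ι, ∀ g : ι →₀ ℝ, (∀ r, R (f r) (g r)) → (∀ r, r ∉ s → f r = g r) →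
      M f ≤ M g := by
    intro s
    induction s using Finset.induction_on with
    | empty =>
      intro g _ h2
      have : f = g := Finsupp.ext fun r => h2 r (by simp)
      rw [this]
    | insert r s hr ih =>
      intro g h1 h2
      have e1 : ∀ a : ℝ, Finsupp.single r a + g.erase r = g.update r a := fun a =>
        (Finsupp.update_eq_single_add_erase g r a).symm
      have h3 : M f ≤ M (Finsupp.single r (f r) + g.erase r) := by
        apply ih
        · intro t
          rw [e1, Finsupp.coe_update, Function.update_apply]
          split_ifs with ht
          · rw [ht]; exact hR _
          · exact h1 t
        · intro t ht
          rw [e1, Finsupp.coe_update, Function.update_apply]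
          split_ifs with ht'
          · rw [ht']
          · exact h2 t (by simp [ht, ht'])
      refine h3.trans ((h r _ _ _ (by simp) (h1 r)).trans ?_)
      rw [Finsupp.single_add_erase]
  refine key (f.support ∪ g.support) g hfg fun r hr => ?_
  simp only [Finset.mem_union, Finsupp.mem_support_iff, not_or, not_not] at hr
  rw [hr.1, hr.2]

theorem exists_pos : ∃ p : ℚ → ℕ → ℚ, (∀ r r' i i', r < r' → p r i < p r' i') ∧
    ∀ r, StrictMono (p r) := by
  have : Countable (ℚ ×ₗ ℕ) := inferInstanceAs (Countable (ℚ × ℕ))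
  obtain ⟨e⟩ := Order.embedding_from_countable_to_dense (ℚ ×ₗ ℕ) ℚ
  refine ⟨fun r i => e (toLex (r, i)), ?_, ?_⟩
  · intro r r' i i' h
    exact e.strictMono (Prod.Lex.toLex_lt_toLex.2 (Or.inl h))
  · intro r i i' h
    exact e.strictMono (Prod.Lex.toLex_lt_toLex.2 (Or.inr ⟨rfl, h⟩))

/-- a lexicographic position function -/
noncomputable def pos : ℚ → ℕ → ℚ := exists_pos.choose

theorem pos_lt {r r' : ℚ} (i i' : ℕ) (h : r < r') : pos r i < pos r' i' :=
  exists_pos.choose_spec.1 r r' i i' h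

theorem pos_mono (r : ℚ) : StrictMono (pos r) := exists_pos.choose_spec.2 r

theorem pos_lt_iff {r r' : ℚ} {i i' : ℕ} : pos r i < pos r' i' ↔ r < r' ∨ (r = r' ∧ i < i') := by
  rcases lt_trichotomy r r' with h | h | h
  · simp [pos_lt i i' h, h]
  · subst h; simp [(pos_mono r).lt_iff_lt]
  · simp [(pos_lt i' i h).not_gt, h.not_gt, h.ne']

theorem pos_eq_iff {r r' : ℚ} {i i' : ℕ} : pos r i = pos r' i' ↔ r = r' ∧ i = i' := by
  constructor
  · intro h
    rcases lt_trichotomy r r' with h1 | h1 | h1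
    · exact absurd h (pos_lt i i' h1).ne
    · subst h1; exact ⟨rfl, (pos_mono r).injective h⟩
    · exact absurd h.symm (pos_lt i' i h1).ne
  · rintro ⟨rfl, rfl⟩; rfl

/-- block map replacing each unit vector by a copy of `z` -/
noncomputable def Blk (z : ℕ →₀ ℝ) : (ℚ →₀ ℝ) →ₗ[ℝ] (ℚ →₀ ℝ) :=
  Finsupp.linearCombination ℝ (fun r => z.mapDomain (pos r))

theorem Blk_single (z : ℕ →₀ ℝ) (r : ℚ) (a : ℝ) :
    Blk z (Finsupp.single r a) = a • z.mapDomain (pos r) := by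
  simp [Blk]

/-- abstract block map -/
noncomputable def Pre (z : ℕ →₀ ℝ) : (ℚ →₀ ℝ) →ₗ[ℝ] (ℚ × ℕ →₀ ℝ) :=
  Finsupp.linearCombination ℝ (fun r => z.mapDomain (Prod.mk r))

theorem Pre_apply (z : ℕ →₀ ℝ) (f : ℚ →₀ ℝ) (p : ℚ × ℕ) : Pre z f p = f p.1 * z p.2 := by
  induction f using Finsupp.induction_linear with
  | zero => simp
  | add f g hf hg => rw [map_add, Finsupp.add_apply, hf, hg, Finsupp.add_apply, add_mul]
  | single r a =>
    obtain ⟨r', i⟩ := p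
    simp only [Pre, Finsupp.linearCombination_single, Finsupp.smul_apply, smul_eq_mul]
    by_cases h : r = r'
    · subst h
      rw [Finsupp.mapDomain_apply (Prod.mk_right_injective r)]; simp
    · rw [Finsupp.mapDomain_of_notMem_range]
      · simp [h]
      · rintro ⟨j, hj⟩; exact h (by simpa using congrArg Prod.fst hj)

theorem mapDomain_Pre (z : ℕ →₀ ℝ) (v : ℚ × ℕ → ℚ) (f : ℚ →₀ ℝ) :
    (Pre z f).mapDomain v = Finsupp.linearCombination ℝ (fun r => z.mapDomain (fun i => v (r, i))) f := by
  induction f using Finsupp.induction_linear with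
  | zero => simp
  | add f g hf hg => rw [map_add, Finsupp.mapDomain_add, hf, hg, map_add]
  | single r a =>
    simp only [Pre, Finsupp.linearCombination_single, Finsupp.mapDomain_smul]
    rw [← Finsupp.mapDomain_comp]; rfl

theorem Blk_eq (z : ℕ →₀ ℝ) (f : ℚ →₀ ℝ) :
    Blk z f = (Pre z f).mapDomain (fun p => pos p.1 p.2) := by
  rw [mapDomain_Pre]; rfl

theorem Blk_support (z : ℕ →₀ ℝ) (f : ℚ →₀ ℝ) (a : ℚ) (ha : a ∈ (Blk z f).support) :
    ∃ r ∈ f.support, ∃ i, a = pos r i := by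
  classical
  rw [Blk_eq] at ha
  obtain ⟨p, hp, rfl⟩ := Finset.mem_image.1 (Finsupp.mapDomain_support ha)
  rw [Finsupp.mem_support_iff, Pre_apply] at hp
  exact ⟨p.1, by rw [Finsupp.mem_support_iff]; exact left_ne_zero_of_mul hp, p.2, rfl⟩

theorem Blk_succ (z : ℕ →₀ ℝ) {n : ℕ} (y : Fin n → (ℚ →₀ ℝ)) (hy : Succ y) :
    Succ fun j => Blk z (y j) := by
  intro j j' hj a ha b hb
  obtain ⟨r, hr, i, rfl⟩ := Blk_support _ _ _ ha
  obtain ⟨r', hr', i', rfl⟩ := Blk_support _ _ _ hb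
  exact pos_lt _ _ (hy j j' hj _ hr _ hr')

theorem Blk_spr {M : Seminorm ℝ (ℚ →₀ ℝ)} (hM : Spr M) (z : ℕ →₀ ℝ) : Spr (M.comp (Blk z)) := by
  intro f g hg
  rw [Seminorm.comp_apply, Seminorm.comp_apply]
  have h1 : Blk z (f.mapDomain g) = (Pre z f).mapDomain (fun p => pos (g p.1) p.2) := by
    rw [mapDomain_Pre, Blk, Finsupp.linearCombination_mapDomain]; rfl
  rw [h1, Blk_eq]
  have hs : ∀ p ∈ (Pre z f).support, p.1 ∈ f.support := by
    intro p hp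
    rw [Finsupp.mem_support_iff, Pre_apply] at hp
    rw [Finsupp.mem_support_iff]; exact left_ne_zero_of_mul hp
  symm
  apply spr2 hM
  · intro a ha b hb h
    rw [pos_lt_iff] at h ⊢
    rcases h with h | h
    · exact Or.inl (hg (hs a ha) (hs b hb) h)
    · exact Or.inr ⟨by rw [h.1], h.2⟩
  · intro a ha b hb h
    rw [pos_eq_iff] at h ⊢
    exact ⟨by rw [h.1], h.2⟩

theorem local_move {M : Seminorm ℝ (ℚ →₀ ℝ)} (hM : Spr M) (z w : ℕ →₀ ℝ) (g : ℕ → ℕ)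
    (hg : StrictMono g) (r : ℚ) (a : ℝ) (f' : ℚ →₀ ℝ) (hr : f' r = 0) :
    M (a • (z.mapDomain g).mapDomain (pos r) + Blk w f') =
      M (a • z.mapDomain (pos r) + Blk w f') := by
  set H : ℚ × ℕ →₀ ℝ := a • z.mapDomain (Prod.mk r) + Pre w f' with hH
  set v : ℚ × ℕ → ℚ := fun p => if p.1 = r then pos r (g p.2) else pos p.1 p.2 with hv
  have h1 : a • z.mapDomain (pos r) + Blk w f' = H.mapDomain (fun p => pos p.1 p.2) := by
    rw [hH, Finsupp.mapDomain_add, ← Blk_eq, Finsupp.mapDomain_smul, ← Finsupp.mapDomain_comp]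
    rfl
  have h2 : a • (z.mapDomain g).mapDomain (pos r) + Blk w f' = H.mapDomain v := by
    rw [hH, Finsupp.mapDomain_add, Blk_eq, Finsupp.mapDomain_smul, ← Finsupp.mapDomain_comp,
      ← Finsupp.mapDomain_comp]
    congr 1
    · congr 2
      ext i; simp [hv]
    · refine Finsupp.mapDomain_congr fun p hp => ?_
      rw [Finsupp.mem_support_iff, Pre_apply] at hp
      have : p.1 ≠ r := by rintro h; rw [h, hr] at hp; simp at hp
      simp [hv, this]
  rw [h1, h2]
  symm
  apply spr2 hM
  · rintro ⟨s, i⟩ - ⟨t, j⟩ - h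
    rw [pos_lt_iff] at h
    simp only [hv]
    split_ifs with e1 e2 e2 <;> simp only [pos_lt_iff] at h ⊢
    · subst e1; subst e2; simpa [hg.lt_iff_lt] using h
    · subst e1
      rcases h with h | h
      · exact Or.inl h
      · exact absurd h.1.symm e2
    · subst e2
      rcases h with h | h
      · exact Or.inl h
      · exact absurd h.1 e1
    · exact h
  · rintro ⟨s, i⟩ - ⟨t, j⟩ - h
    rw [pos_eq_iff] at h
    simp only at h
    rw [h.1, h.2]

theorem copy_move {M : Seminorm ℝ (ℚ →₀ ℝ)} (hM : Spr M) (z : ℕ →₀ ℝ) (r r' : ℚ) :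
    M (z.mapDomain (pos r)) = M (z.mapDomain (pos r')) := by
  apply spr2 hM
  · intro a _ b _ h; exact pos_mono _ ((pos_mono _).lt_iff_lt.1 h)
  · intro a _ b _ h; rw [(pos_mono _).injective h]

/-! ### difference step -/

theorem d_step {M : Seminorm ℝ (ℚ →₀ ℝ)} (hM : Spr M)
    (hd : 0 < M (Finsupp.single 0 1 - Finsupp.single 1 1)) :
    ∃ M0 : Seminorm ℝ (ℚ →₀ ℝ), Spr M0 ∧ 0 < M0 (Finsupp.single 0 1) ∧
      (∀ f g : ℚ →₀ ℝ, (∀ r, f r = g r ∨ f r = 0) → M0 f ≤ M0 g) ∧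
      ∀ θ, Kr M0 θ → Kr M θ := by
  set z : ℕ →₀ ℝ := Finsupp.single 0 1 - Finsupp.single 1 1 with hz
  have hmap : ∀ {κ : Type} (g : ℕ → κ), z.mapDomain g = Finsupp.single (g 0) 1 - Finsupp.single (g 1) 1 := by
    intro κ g
    have := map_sub (Finsupp.mapDomain.addMonoidHom g : (ℕ →₀ ℝ) →+ (κ →₀ ℝ))
      (Finsupp.single 0 1) (Finsupp.single 1 1)
    simpa using this
  have half : ∀ (r : ℚ) (f' : ℚ →₀ ℝ) (a : ℝ), f' r = 0 →
      M.comp (Blk z) (Finsupp.single r (a / 2) + f') ≤ M.comp (Blk z) (Finsupp.single r a + f') := by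
    intro r f' a hr
    simp only [Seminorm.comp_apply, map_add, Blk_single]
    have h1 := local_move hM z z (fun i => i + 1) (fun i j h => by simpa using h) r a f' hr
    have h2 := local_move hM z z (fun i => 2 * i) (fun i j h => by simpa using h) r (a / 2) f' hr
    rw [hmap (pos r)] at h1 h2
    rw [hmap, sub_eq_add_neg, Finsupp.mapDomain_add, ← Finsupp.single_neg, Finsupp.mapDomain_single,
      Finsupp.mapDomain_single, Finsupp.single_neg] at h1 h2
    rw [hmap (pos r), ← h2]
    have h3 : (a / 2) • (Finsupp.single (pos r (2 * 0)) (1 : ℝ) + -Finsupp.single (pos r (2 * 1)) 1)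
        + Blk z f' = (1 / 2 : ℝ) • (a • (Finsupp.single (pos r 0) 1 - Finsupp.single (pos r 1) 1) + Blk z f')
          + (1 / 2 : ℝ) • (a • (Finsupp.single (pos r (0 + 1)) (1 : ℝ) + -Finsupp.single (pos r (1 + 1)) 1) + Blk z f') := by
      change (a / 2) • (Finsupp.single (pos r 0) (1 : ℝ) + -Finsupp.single (pos r 2) 1)
        + Blk z f' = (1 / 2 : ℝ) • (a • (Finsupp.single (pos r 0) 1 - Finsupp.single (pos r 1) 1) + Blk z f')
          + (1 / 2 : ℝ) • (a • (Finsupp.single (pos r 1) (1 : ℝ) + -Finsupp.single (pos r 2) 1) + Blk z f')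
      module
    rw [h3]
    refine (map_add_le_add _ _ _).trans ?_
    rw [map_smul_eq_mul, map_smul_eq_mul, h1]
    norm_num
    linarith
  have step : ∀ (r : ℚ) (f' : ℚ →₀ ℝ) (a : ℝ), f' r = 0 →
      M.comp (Blk z) f' ≤ M.comp (Blk z) (Finsupp.single r a + f') := by
    intro r f' a hr
    have h1 : ∀ k : ℕ, M.comp (Blk z) (Finsupp.single r (a / 2 ^ k) + f') ≤
        M.comp (Blk z) (Finsupp.single r a + f') := by
      intro k
      induction k with
      | zero => simp
      | succ k ih =>
        refine le_trans ?_ ih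
        have := half r f' (a / 2 ^ k) hr
        rwa [div_div, ← pow_succ] at this
    have h2 : ∀ k : ℕ, M.comp (Blk z) f' ≤ |a| * (1 / 2) ^ k * M.comp (Blk z) (Finsupp.single r 1)
        + M.comp (Blk z) (Finsupp.single r a + f') := by
      intro k
      have h3 : f' = (-(a / 2 ^ k)) • Finsupp.single r (1 : ℝ) +
          (Finsupp.single r (a / 2 ^ k) + f') := by
        rw [Finsupp.smul_single, smul_eq_mul, mul_one, Finsupp.single_neg]; abel
      have h4 := map_add_le_add (M.comp (Blk z)) ((-(a / 2 ^ k)) • Finsupp.single r (1 : ℝ))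
        (Finsupp.single r (a / 2 ^ k) + f')
      rw [← h3, map_smul_eq_mul, norm_neg, Real.norm_eq_abs, abs_div,
        abs_of_pos (by positivity : (0 : ℝ) < 2 ^ k)] at h4
      have h5 : |a| * (1 / 2) ^ k = |a| / 2 ^ k := by
        rw [one_div, inv_pow]; rfl
      rw [h5]
      linarith [h1 k]
    have h3 : Tendsto (fun k : ℕ => |a| * (1 / 2) ^ k * M.comp (Blk z) (Finsupp.single r 1)
        + M.comp (Blk z) (Finsupp.single r a + f')) atTop
        (𝓝 (|a| * 0 * M.comp (Blk z) (Finsupp.single r 1)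
        + M.comp (Blk z) (Finsupp.single r a + f'))) := by
      refine Tendsto.add_const _ (Tendsto.mul_const _ (Tendsto.const_mul _ ?_))
      exact tendsto_pow_atTop_nhds_zero_of_lt_one (by norm_num) (by norm_num)
    have := ge_of_tendsto' h3 h2
    simpa using this
  refine ⟨M.comp (Blk z), Blk_spr hM z, ?_, ?_, ?_⟩
  · rw [Seminorm.comp_apply, Blk_single, one_smul]
    have : M (z.mapDomain (pos 0)) = M (z.mapDomain (fun i : ℕ => (i : ℚ))) := by
      apply spr2 hM
      · intro a _ b _ h; exact_mod_cast (pos_mono _).lt_iff_lt.1 h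
      · intro a _ b _ h; exact_mod_cast (pos_mono _).injective h
    rw [this, hmap]
    simpa using hd
  · intro f g hfg
    refine mono_of_step _ (fun a b => a = b ∨ a = 0) (fun a => Or.inl rfl) ?_ f g hfg
    rintro r f' a b hr (rfl | rfl)
    · exact le_rfl
    · simpa using step r f' b hr
  · intro θ h n η hη
    obtain ⟨y, hy, hyc⟩ := h n η hη
    refine ⟨fun j => Blk z (y j), Blk_succ z y hy, fun c => ?_⟩
    have := hyc c
    rw [Seminorm.comp_apply, map_sum] at this
    simpa only [map_smul] using this

end Krivine

namespace Krivine
open Filter Topology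

/-- alternating unit vectors -/
noncomputable def alt (t : ℕ) : ℕ →₀ ℝ := Finsupp.single t ((-1) ^ t)

theorem alt_succ (t : ℕ) : (alt t).mapDomain Nat.succ = -alt (t + 1) := by
  rw [alt, alt, Finsupp.mapDomain_single, pow_succ, ← Finsupp.single_neg]; simp

theorem exists_alt (m : Seminorm ℝ (ℕ →₀ ℝ)) (hm : ∀ w, m (w.mapDomain Nat.succ) = m w)
    (hsup : ∀ f g : ℕ →₀ ℝ, (∀ r, f r = g r ∨ f r = 0) → m f ≤ m g)
    (h0 : 0 < m (Finsupp.single 0 1)) (n : ℕ) (hn : 0 < n) :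
    ∃ w : ℕ →₀ ℝ, m w = 1 ∧ m (w + w.mapDomain Nat.succ) ≤ 2 / n := by
  classical
  set B : ℕ → (ℕ →₀ ℝ) := fun k => ∑ i ∈ Finset.range n, alt (i + k) with hB
  have hmap : ∀ (s : Finset ℕ) (F : ℕ → (ℕ →₀ ℝ)), (∑ i ∈ s, F i).mapDomain Nat.succ
      = ∑ i ∈ s, (F i).mapDomain Nat.succ := fun s F => Finsupp.mapDomain_finsetSum
  have hBs : ∀ k, (B k).mapDomain Nat.succ = - B (k + 1) := by
    intro k
    simp only [hB, hmap, alt_succ, Finset.sum_neg_distrib]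
    rfl
  have hmB : ∀ k, m (B k) = m (B 0) := by
    intro k
    induction k with
    | zero => rfl
    | succ k ih => rw [← ih, ← hm (B k), hBs, map_neg_eq_map]
  set z : ℕ →₀ ℝ := ∑ j ∈ Finset.range (2 * n), B j with hz
  have hBpos : 0 < m (B 0) := by
    refine h0.trans_le (hsup _ _ fun r => ?_)
    by_cases hr : r = 0
    · left
      subst hr
      simp only [hB, alt, add_zero, Finsupp.finsetSum_apply, Finsupp.single_apply]
      rw [Finset.sum_eq_single 0] <;> simp +contextual [hn.ne']
    · right; simp [Ne.symm hr]
  have hzd : z + z.mapDomain Nat.succ = B 0 - B (2 * n) := by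
    rw [hz, hmap, ← Finset.sum_add_distrib]
    simp only [hBs, ← sub_eq_add_neg]
    exact Finset.sum_range_sub' B (2 * n)
  have hzd' : m (z + z.mapDomain Nat.succ) ≤ 2 * m (B 0) := by
    rw [hzd]
    refine (map_sub_le_add m _ _).trans ?_
    rw [hmB (2 * n)]; linarith
  have hzl : n * m (B 0) ≤ m z := by
    have : m ((n : ℝ) • B n) = n * m (B 0) := by
      rw [map_smul_eq_mul, hmB]; simp
    rw [← this]
    refine hsup _ _ fun t => ?_
    have hBt : ∀ k, B k t = if k ≤ t ∧ t < n + k then (-1) ^ t else 0 := by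
      intro k
      simp only [hB, alt, Finsupp.finsetSum_apply, Finsupp.single_apply]
      split_ifs with h
      · rw [Finset.sum_eq_single (t - k)]
        · rw [Nat.sub_add_cancel h.1]; simp
        · intro b _ hb; rw [if_neg]; omega
        · intro hh; exfalso; apply hh; rw [Finset.mem_range]; omega
      · refine Finset.sum_eq_zero fun i hi => ?_
        rw [Finset.mem_range] at hi
        rw [if_neg]; omega
    rw [Finsupp.smul_apply, hBt]
    split_ifs with h
    · left
      simp only [hz, Finsupp.finsetSum_apply, hBt]
      rw [← Finset.sum_filter, Finset.sum_const]
      have : (Finset.range (2 * n)).filter (fun k => k ≤ t ∧ t < n + k) = Finset.Ico (t + 1 - n) (t + 1) := by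
        ext k; simp only [Finset.mem_filter, Finset.mem_range, Finset.mem_Ico]; omega
      rw [this, Nat.card_Ico]
      have : t + 1 - (t + 1 - n) = n := by omega
      rw [this]; simp
    · right; simp
  have hn' : (0 : ℝ) < n := by exact_mod_cast hn
  have hzpos : 0 < m z := lt_of_lt_of_le (by positivity) hzl
  refine ⟨(m z)⁻¹ • z, ?_, ?_⟩
  · rw [map_smul_eq_mul, Real.norm_eq_abs, abs_of_pos (by positivity), inv_mul_cancel₀ hzpos.ne']
  · rw [Finsupp.mapDomain_smul, ← smul_add, map_smul_eq_mul, Real.norm_eq_abs,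
      abs_of_pos (by positivity), inv_mul_le_iff₀ hzpos, mul_div_assoc', le_div_iff₀ hn']
    nlinarith

theorem sign_step {M : Seminorm ℝ (ℚ →₀ ℝ)} (hM : Spr M) (h0 : 0 < M (Finsupp.single 0 1))
    (hsup : ∀ f g : ℚ →₀ ℝ, (∀ r, f r = g r ∨ f r = 0) → M f ≤ M g) :
    ∃ M' : Seminorm ℝ (ℚ →₀ ℝ), Spr M' ∧ M' (Finsupp.single 0 1) = 1 ∧
      (∀ f g : ℚ →₀ ℝ, (∀ r, |f r| ≤ |g r|) → M' f ≤ M' g) ∧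
      ∀ θ, 0 ≤ θ → Kr M' θ → Kr M θ := by
  set m : Seminorm ℝ (ℕ →₀ ℝ) := M.comp (Finsupp.lmapDomain ℝ ℝ (pos 0)) with hm
  have hma : ∀ (r : ℚ) w, M (w.mapDomain (pos r)) = m w := fun r w => copy_move hM w r 0
  have hms : ∀ w, m (w.mapDomain Nat.succ) = m w := by
    intro w
    have := local_move hM w 0 Nat.succ (fun i j h => Nat.succ_lt_succ h) 0 1 0 rfl
    simpa [hma] using this
  have hex := fun k : ℕ => exists_alt m hms (by
    intro f g hfg
    rw [← hma 0, ← hma 0]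
    refine hsup _ _ fun r => ?_
    by_cases hr : r ∈ Set.range (pos 0)
    · obtain ⟨i, rfl⟩ := hr
      rw [Finsupp.mapDomain_apply (pos_mono 0).injective, Finsupp.mapDomain_apply (pos_mono 0).injective]
      exact hfg i
    · right; exact Finsupp.mapDomain_of_notMem_range _ _ hr) (by
      rw [← hma 0, Finsupp.mapDomain_single, ← hM (Finsupp.single (pos 0 0) 1) (fun _ => 0)]
      · simpa using h0
      · intro a ha b hb hab
        have ha' := Finset.mem_singleton.1 (Finsupp.support_single_subset ha)
        have hb' := Finset.mem_singleton.1 (Finsupp.support_single_subset hb)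
        rw [ha', hb'] at hab; exact absurd hab (lt_irrefl _)) (k + 1) k.succ_pos
  choose w hw1 hw2 using hex
  have hbd : ∀ v, ∃ C, ∀ᶠ k in (hyperfilter ℕ : Filter ℕ), (M.comp (Blk (w k))) v ≤ C := by
    intro v
    refine ⟨v.sum fun r a => |a|, Eventually.of_forall fun k => ?_⟩
    rw [Seminorm.comp_apply, Blk, Finsupp.linearCombination_apply, Finsupp.sum, Finsupp.sum]
    refine (seminorm_sum_le _ _ _).trans (Finset.sum_le_sum fun r _ => ?_)
    rw [map_smul_eq_mul, hma, hw1, mul_one, Real.norm_eq_abs]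
  set M' := ulim (hyperfilter ℕ) (fun k => M.comp (Blk (w k))) with hM'
  have ht : ∀ v, Tendsto (fun k => M (Blk (w k) v)) (hyperfilter ℕ : Filter ℕ) (𝓝 (M' v)) :=
    fun v => tendsto_ulim (hyperfilter ℕ) _ hbd v
  have hflip : ∀ (r : ℚ) (f' : ℚ →₀ ℝ) (a : ℝ), f' r = 0 →
      M' (Finsupp.single r (-a) + f') ≤ M' (Finsupp.single r a + f') := by
    intro r f' a hr
    have h1 : ∀ k : ℕ, M (Blk (w k) (Finsupp.single r (-a) + f')) ≤
        M (Blk (w k) (Finsupp.single r a + f')) + |a| * (2 * (1 / ((k : ℝ) + 1))) := by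
      intro k
      rw [map_add (Blk (w k)), map_add (Blk (w k)), Blk_single, Blk_single,
        ← local_move hM (w k) (w k) Nat.succ (fun i j h => Nat.succ_lt_succ h) r (-a) f' hr]
      have e : -a • ((w k).mapDomain Nat.succ).mapDomain (pos r) + Blk (w k) f'
        = (a • (w k).mapDomain (pos r) + Blk (w k) f') +
          (-a) • (w k + (w k).mapDomain Nat.succ).mapDomain (pos r) := by
        rw [Finsupp.mapDomain_add]; module
      rw [e]
      refine (map_add_le_add _ _ _).trans ?_
      rw [map_smul_eq_mul, hma, norm_neg, Real.norm_eq_abs]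
      gcongr
      refine (hw2 k).trans (le_of_eq ?_)
      push_cast; ring
    refine le_of_tendsto_of_tendsto' (ht _) ?_ h1
    have h2 : Tendsto (fun k : ℕ => |a| * (2 * (1 / ((k : ℝ) + 1)))) (hyperfilter ℕ : Filter ℕ)
        (𝓝 (|a| * (2 * 0))) :=
      ((tendsto_one_div_add_atTop_nhds_zero_nat.mono_left Nat.hyperfilter_le_atTop).const_mul
        _).const_mul _
    simpa using (ht (Finsupp.single r a + f')).add h2
  refine ⟨M', ?_, ?_, ?_, ?_⟩
  · intro f g hg
    refine tendsto_nhds_unique (ht _) ?_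
    refine (ht f).congr fun k => ?_
    exact (Blk_spr hM (w k) f g hg).symm
  · refine tendsto_nhds_unique (ht _) ?_
    simp only [Blk_single, one_smul, hma, hw1]
    exact tendsto_const_nhds
  · intro f g hfg
    refine mono_of_step M' (fun a b => |a| ≤ |b|) (fun a => le_rfl) ?_ f g hfg
    intro r f' a b hr hab
    by_cases hb : b = 0
    · subst hb
      have : a = 0 := by simpa using hab
      rw [this]
    have ht1 : |a / b| ≤ 1 := by rw [abs_div]; exact div_le_one_of_le₀ hab (abs_nonneg _)
    rw [abs_le] at ht1
    have e : Finsupp.single r a + f' = ((1 + a / b) / 2) • (Finsupp.single r b + f') +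
        ((1 - a / b) / 2) • (Finsupp.single r (-b) + f') := by
      rw [smul_add, smul_add, Finsupp.smul_single, Finsupp.smul_single, add_add_add_comm,
        ← Finsupp.single_add, ← add_smul, smul_eq_mul, smul_eq_mul]
      have e1 : (1 + a / b) / 2 * b + (1 - a / b) / 2 * -b = a := by field_simp; ring
      have e2 : (1 + a / b) / 2 + (1 - a / b) / 2 = 1 := by ring
      rw [e1, e2, one_smul]
    rw [e]
    refine (map_add_le_add _ _ _).trans ?_
    rw [map_smul_eq_mul, map_smul_eq_mul, Real.norm_eq_abs, Real.norm_eq_abs,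
      abs_of_nonneg (by linarith), abs_of_nonneg (by linarith)]
    have := mul_le_mul_of_nonneg_left (hflip r f' b hr) (by linarith : 0 ≤ (1 - a / b) / 2)
    nlinarith
  · intro θ hθ hKr n η hη
    obtain ⟨y, hy, hyc⟩ := Kr_transfer M' hθ hKr n η hη (fun _ : ℕ => M)
    obtain ⟨k, hk⟩ := (hyc (hyperfilter ℕ : Filter ℕ) (fun k => Blk (w k)) (fun c => ht _)).exists
    exact ⟨fun j => Blk (w k) (y j), Blk_succ _ _ hy, hk⟩

end Krivine

namespace Krivine
open Filter Topology

/-- the positive cone of vectors supported in `[0,1)` -/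
def P (f : ℚ →₀ ℝ) : Prop := 0 ≤ f ∧ ∀ r ∈ f.support, 0 ≤ r ∧ r < 1

theorem P_zero : P 0 := ⟨le_rfl, by simp⟩

theorem P_add {f g : ℚ →₀ ℝ} (hf : P f) (hg : P g) : P (f + g) := by
  classical
  refine ⟨add_nonneg hf.1 hg.1, fun r hr => ?_⟩
  rcases Finset.mem_union.1 (Finsupp.support_add hr) with h | h
  · exact hf.2 r h
  · exact hg.2 r h

theorem P_smul {f : ℚ →₀ ℝ} {c : ℝ} (hc : 0 ≤ c) (hf : P f) : P (c • f) :=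
  ⟨smul_nonneg hc hf.1, fun r hr => hf.2 r (Finsupp.support_smul hr)⟩

theorem P_sum {ι : Type*} (s : Finset ι) (F : ι → (ℚ →₀ ℝ)) (h : ∀ i ∈ s, P (F i)) :
    P (∑ i ∈ s, F i) := by
  classical
  induction s using Finset.induction_on with
  | empty => exact P_zero
  | insert a s ha ih =>
    rw [Finset.sum_insert ha]
    exact P_add (h a (by simp)) (ih fun i hi => h i (by simp [hi]))

theorem P_single : P (Finsupp.single 0 1) := by
  refine ⟨?_, fun r hr => ?_⟩
  · rw [Finsupp.single_nonneg]; exact zero_le_one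
  · have := Finset.mem_singleton.1 (Finsupp.support_single_subset hr)
    subst this; norm_num

theorem mapDomain_nonneg {ι κ : Type*} {f : ι →₀ ℝ} (hf : 0 ≤ f) (g : ι → κ) : 0 ≤ f.mapDomain g := by
  rw [Finsupp.mapDomain, Finsupp.sum]
  exact Finset.sum_nonneg fun i _ => by rw [Finsupp.single_nonneg]; exact hf i

/-- the `n`-fold refinement operator -/
noncomputable def T (n : ℕ) : Module.End ℝ (ℚ →₀ ℝ) :=
  ∑ j ∈ Finset.range n, Finsupp.lmapDomain ℝ ℝ (fun r : ℚ => (r + j) / n)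

theorem T_apply (n : ℕ) (f : ℚ →₀ ℝ) :
    T n f = ∑ j ∈ Finset.range n, f.mapDomain (fun r : ℚ => (r + j) / n) := by
  simp [T, LinearMap.sum_apply]

theorem T_one : T 1 = 1 := by
  ext f; simp [T_apply]

theorem T_mul {a b : ℕ} (ha : 0 < a) (hb : 0 < b) : T a * T b = T (a * b) := by
  have key : ∀ (F : ℕ → (ℚ →₀ ℝ)) (a : ℕ), ∑ i ∈ Finset.range a, ∑ j ∈ Finset.range b, F (i * b + j)
      = ∑ k ∈ Finset.range (a * b), F k := by
    intro F a
    induction a with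
    | zero => simp
    | succ a ih => rw [Finset.sum_range_succ, ih, Nat.succ_mul, Finset.sum_range_add]
  refine Finsupp.lhom_ext' fun r => LinearMap.ext_ring ?_
  simp only [LinearMap.comp_apply, Finsupp.lsingle_apply, Module.End.mul_apply, T_apply,
    Finsupp.mapDomain_single, Finsupp.mapDomain_finsetSum]
  rw [← key]
  refine Finset.sum_congr rfl fun i _ => Finset.sum_congr rfl fun j _ => ?_
  congr 1
  have : (a : ℚ) ≠ 0 := by exact_mod_cast ha.ne'
  have : (b : ℚ) ≠ 0 := by exact_mod_cast hb.ne'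
  push_cast
  field_simp
  ring

theorem T_pow {a : ℕ} (ha : 0 < a) (k : ℕ) : T a ^ k = T (a ^ k) := by
  induction k with
  | zero => simp [T_one]
  | succ k ih => rw [pow_succ, ih, T_mul (pow_pos ha k) ha, pow_succ]

theorem P_T (n : ℕ) {f : ℚ →₀ ℝ} (hf : P f) : P (T n f) := by
  classical
  rw [T_apply]
  refine P_sum _ _ fun j hj => ⟨mapDomain_nonneg hf.1 _, fun r hr => ?_⟩
  obtain ⟨s, hs, rfl⟩ := Finset.mem_image.1 (Finsupp.mapDomain_support hr)
  have := hf.2 s hs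
  rw [Finset.mem_range] at hj
  have hn : (0 : ℚ) < n := by exact_mod_cast (by omega : 0 < n)
  have hj' : (j : ℚ) + 1 ≤ n := by exact_mod_cast hj
  constructor
  · have := this.1; positivity
  · rw [div_lt_one hn]; linarith [this.2]

/-- the standing properties of the seminorm -/
structure Nice (M : Seminorm ℝ (ℚ →₀ ℝ)) : Prop where
  spr : Spr M
  one : M (Finsupp.single 0 1) = 1
  lat : ∀ f g : ℚ →₀ ℝ, (∀ r, |f r| ≤ |g r|) → M f ≤ M g

theorem Nice.mono {M : Seminorm ℝ (ℚ →₀ ℝ)} (hM : Nice M) {f g : ℚ →₀ ℝ} (hf : 0 ≤ f) (h : f ≤ g) :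
    M f ≤ M g :=
  hM.lat f g fun r => by
    rw [abs_of_nonneg (hf r), abs_of_nonneg ((hf.trans h) r)]; exact h r

theorem Nice.smul {M : Seminorm ℝ (ℚ →₀ ℝ)} {c : ℝ} (hc : 0 ≤ c) (f : ℚ →₀ ℝ) :
    M (c • f) = c * M f := by
  rw [map_smul_eq_mul, Real.norm_eq_abs, abs_of_nonneg hc]

theorem Nice.T_le {M : Seminorm ℝ (ℚ →₀ ℝ)} (hM : Nice M) {n : ℕ} (f : ℚ →₀ ℝ) :
    M (T n f) ≤ n * M f := by
  rw [T_apply]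
  refine (seminorm_sum_le _ _ _).trans ?_
  have : ∀ j ∈ Finset.range n, M (f.mapDomain (fun r : ℚ => (r + j) / n)) = M f := by
    intro j hj
    apply hM.spr
    intro a _ b _ hab
    have hn : (0 : ℚ) < n := by exact_mod_cast (by rw [Finset.mem_range] at hj; omega : 0 < n)
    exact div_lt_div_of_pos_right (by linarith) hn
  rw [Finset.sum_congr rfl this]; simp

theorem Nice.T_mono {M : Seminorm ℝ (ℚ →₀ ℝ)} (hM : Nice M) {n m : ℕ} (hn : 0 < n) (hnm : n ≤ m)
    {f : ℚ →₀ ℝ} (hf : 0 ≤ f) : M (T n f) ≤ M (T m f) := by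
  have hn' : (0 : ℚ) < n := by exact_mod_cast hn
  have hm' : (0 : ℚ) < m := by exact_mod_cast hn.trans_le hnm
  have h1 : M (T n f) = M (∑ j ∈ Finset.range n, f.mapDomain (fun r : ℚ => (r + j) / m)) := by
    rw [← hM.spr (T n f) (fun r => r * n / m)]
    · congr 1
      rw [T_apply, Finsupp.mapDomain_finsetSum]
      refine Finset.sum_congr rfl fun j _ => ?_
      rw [← Finsupp.mapDomain_comp]
      congr 1
      ext r
      simp only [Function.comp_apply]
      field_simp
    · intro a _ b _ hab
      exact div_lt_div_of_pos_right (mul_lt_mul_of_pos_right hab hn') hm'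
  rw [h1, T_apply]
  refine hM.mono (Finset.sum_nonneg fun j _ => mapDomain_nonneg hf _) ?_
  exact Finset.sum_le_sum_of_subset_of_nonneg (Finset.range_mono hnm)
    fun j _ _ => mapDomain_nonneg hf _

/-! ### iteration of positive operators -/

/-- partial sums of powers -/
noncomputable def G (S : Module.End ℝ (ℚ →₀ ℝ)) (n : ℕ) : Module.End ℝ (ℚ →₀ ℝ) :=
  ∑ i ∈ Finset.range n, S ^ i

theorem G_apply (S : Module.End ℝ (ℚ →₀ ℝ)) (n : ℕ) (x : ℚ →₀ ℝ) :
    G S n x = ∑ i ∈ Finset.range n, (S ^ i) x := by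
  simp [G, LinearMap.sum_apply]

theorem P_pow {S : Module.End ℝ (ℚ →₀ ℝ)} (hS : ∀ f, P f → P (S f)) (i : ℕ) {x : ℚ →₀ ℝ} (hx : P x) :
    P ((S ^ i) x) := by
  induction i with
  | zero => simpa using hx
  | succ i ih => rw [pow_succ', Module.End.mul_apply]; exact hS _ ih

theorem P_G {S : Module.End ℝ (ℚ →₀ ℝ)} (hS : ∀ f, P f → P (S f)) (n : ℕ) {x : ℚ →₀ ℝ} (hx : P x) :
    P (G S n x) := by
  rw [G_apply]; exact P_sum _ _ fun i _ => P_pow hS i hx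

theorem G_sub (S : Module.End ℝ (ℚ →₀ ℝ)) (n : ℕ) (x : ℚ →₀ ℝ) :
    G S n x - S (G S n x) = x - (S ^ n) x := by
  rw [G_apply, map_sum, ← Finset.sum_sub_distrib]
  have := Finset.sum_range_sub' (fun i => (S ^ i) x) n
  simp only [pow_zero, Module.End.one_apply] at this
  rw [← this]
  refine Finset.sum_congr rfl fun i _ => ?_
  rw [pow_succ', Module.End.mul_apply]

theorem G_mono {S : Module.End ℝ (ℚ →₀ ℝ)} (hS : ∀ f, P f → P (S f)) {n m : ℕ} (h : n ≤ m)
    {x : ℚ →₀ ℝ} (hx : P x) : G S n x ≤ G S m x := by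
  rw [G_apply, G_apply]
  exact Finset.sum_le_sum_of_subset_of_nonneg (Finset.range_mono h)
    fun j _ _ => (P_pow hS j hx).1

theorem le_G {S : Module.End ℝ (ℚ →₀ ℝ)} (hS : ∀ f, P f → P (S f)) {m : ℕ} (h : 1 ≤ m)
    {x : ℚ →₀ ℝ} (hx : P x) : x ≤ G S m x := by
  have := G_mono hS h hx
  rwa [G_apply, Finset.sum_range_one, pow_zero, Module.End.one_apply] at this

theorem pow_le_of {M : Seminorm ℝ (ℚ →₀ ℝ)} {S : Module.End ℝ (ℚ →₀ ℝ)} {B : ℝ} (hB : 0 ≤ B)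
    (h : ∀ f, M (S f) ≤ B * M f) (i : ℕ) (f : ℚ →₀ ℝ) : M ((S ^ i) f) ≤ B ^ i * M f := by
  induction i with
  | zero => simp
  | succ i ih =>
    rw [pow_succ', Module.End.mul_apply, pow_succ', mul_assoc]
    exact (h _).trans (mul_le_mul_of_nonneg_left ih hB)

theorem G_le_of {M : Seminorm ℝ (ℚ →₀ ℝ)} {S : Module.End ℝ (ℚ →₀ ℝ)} {B : ℝ} (hB : 1 ≤ B)
    (h : ∀ f, M (S f) ≤ B * M f) (n : ℕ) (f : ℚ →₀ ℝ) : M (G S n f) ≤ n * B ^ n * M f := by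
  rw [G_apply]
  refine (seminorm_sum_le _ _ _).trans ?_
  calc _ ≤ ∑ i ∈ Finset.range n, B ^ n * M f := by
        refine Finset.sum_le_sum fun i hi => (pow_le_of (by linarith) h i f).trans ?_
        have := apply_nonneg M f
        gcongr
        exact (Finset.mem_range.1 hi).le
    _ = _ := by simp [mul_assoc]

/-! ### first eigenvector -/

theorem eigen_two {M : Seminorm ℝ (ℚ →₀ ℝ)} (hM : Nice M) : ∃ l : ℝ, 1 ≤ l ∧ l ≤ 2 ∧
    ∀ δ : ℝ, 0 < δ → ∃ z, P z ∧ 0 < M z ∧ M (T 2 z - l • z) ≤ δ * M z := by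
  set Gs : Set ℝ := {μ | 0 < μ ∧ ∃ k : ℕ, 1 ≤ k ∧ ∀ x, P x → M ((T 2 ^ k) x) ≤ μ ^ k * M x} with hGs
  have h2 : (2 : ℝ) ∈ Gs := ⟨by norm_num, 1, le_rfl, fun x _ => by simpa using hM.T_le (n := 2) x⟩
  have hlb : ∀ μ ∈ Gs, (1 : ℝ) ≤ μ := by
    rintro μ ⟨hμ, k, hk, h⟩
    have h1 := h _ P_single
    have h3 := hM.T_mono one_pos (Nat.one_le_two_pow (n := k)) P_single.1
    rw [T_one, Module.End.one_apply, ← T_pow two_pos] at h3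
    rw [hM.one] at h1 h3
    rw [mul_one] at h1
    by_contra hlt
    push Not at hlt
    have := pow_lt_one₀ hμ.le hlt (by omega : k ≠ 0)
    linarith
  have hbdd : BddBelow Gs := ⟨1, hlb⟩
  have hl1 : 1 ≤ sInf Gs := le_csInf ⟨2, h2⟩ hlb
  have hl2 : sInf Gs ≤ 2 := csInf_le hbdd h2
  refine ⟨sInf Gs, hl1, hl2, fun δ hδ => ?_⟩
  set l := sInf Gs with hl
  obtain ⟨A, hA⟩ : ∃ A : ℕ, 7 / δ < A := exists_nat_gt _
  have hA0 : (0 : ℝ) < A := lt_trans (by positivity) hA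
  have hA0' : 0 < A := by exact_mod_cast hA0
  set k : ℕ := 2 * A ^ 2 with hk
  have hk0 : k ≠ 0 := by positivity
  obtain ⟨c, hc1, hck⟩ : ∃ c : ℝ, 1 < c ∧ c ^ k = 2 := by
    refine ⟨(2 : ℝ) ^ ((k : ℝ)⁻¹), ?_, Real.rpow_inv_natCast_pow (by norm_num) hk0⟩
    exact Real.one_lt_rpow (by norm_num) (by positivity)
  obtain ⟨μ, hμG, hμ⟩ : ∃ μ ∈ Gs, μ < min (l * c) (l + 1 / A) := by
    apply exists_lt_of_csInf_lt ⟨2, h2⟩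
    rw [lt_min_iff]
    constructor
    · nlinarith
    · have : 0 < 1 / (A : ℝ) := by positivity
      linarith
  rw [lt_min_iff] at hμ
  have hlμ : l ≤ μ := csInf_le hbdd hμG
  obtain ⟨hμ0, k', hk'1, hk'⟩ := hμG
  have hν : μ / c ∉ Gs := by
    intro h
    have := csInf_le hbdd h
    rw [← hl, le_div_iff₀ (by linarith)] at this
    linarith [hμ.1]
  obtain ⟨x, hxP, hx⟩ : ∃ x, P x ∧ (μ / c) ^ k * M x < M ((T 2 ^ k) x) := by
    by_contra hcon
    push Not at hcon
    exact hν ⟨by positivity, k, by omega, hcon⟩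
  rw [div_pow, hck] at hx
  have hx0 : 0 < M x := by
    rcases (apply_nonneg M x).eq_or_lt with h | h
    · exfalso
      have := pow_le_of (M := M) (S := T 2) (B := 2) (by norm_num) (fun f => by simpa using hM.T_le (n := 2) f) k x
      rw [← h] at this hx
      linarith
    · exact h
  set S : Module.End ℝ (ℚ →₀ ℝ) := μ⁻¹ • T 2 with hS
  have hSP : ∀ f, P f → P (S f) := fun f hf => P_smul (by positivity) (P_T 2 hf)
  have hSk : ∀ i f, M ((S ^ i) f) = (μ ^ i)⁻¹ * M ((T 2 ^ i) f) := by
    intro i f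
    rw [hS, smul_pow, LinearMap.smul_apply, Nice.smul (by positivity), inv_pow]
  have hSx : 1 / 2 * M x ≤ M ((S ^ k) x) := by
    rw [hSk, inv_mul_eq_div, le_div_iff₀ (by positivity)]
    linarith
  set D := G S (k + 1) with hD
  have hDD : (k + 1) * M ((S ^ k) x) ≤ M (D (D x)) := by
    have h1 : ((k : ℝ) + 1) • (S ^ k) x ≤ D (D x) := by
      rw [hD, G_apply S (k + 1) (G S (k + 1) x)]
      have : ((k : ℝ) + 1) • (S ^ k) x = ∑ i ∈ Finset.range (k + 1), (S ^ k) x := by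
        rw [Finset.sum_const, Finset.card_range, ← Nat.cast_smul_eq_nsmul ℝ]; push_cast; rfl
      rw [this]
      refine Finset.sum_le_sum fun i hi => ?_
      rw [G_apply, map_sum]
      have hi' : i ≤ k := by rw [Finset.mem_range] at hi; omega
      have e : (S ^ k) x = (S ^ i) ((S ^ (k - i)) x) := by
        rw [← Module.End.mul_apply, ← pow_add]; congr 2; omega
      rw [e]
      exact Finset.single_le_sum (f := fun j => (S ^ i) ((S ^ j) x))
        (fun j _ => (P_pow hSP i (P_pow hSP j hxP)).1) (Finset.mem_range.2 (by omega))
    have h2 := hM.mono (smul_nonneg (by positivity) (P_pow hSP k hxP).1) h1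
    rwa [Nice.smul (by positivity)] at h2
  obtain ⟨y, hyP, hy0, hy⟩ : ∃ y, P y ∧ 0 < M y ∧ A * M y ≤ M (D y) := by
    by_cases h : A * M x ≤ M (D x)
    · exact ⟨x, hxP, hx0, h⟩
    · push Not at h
      refine ⟨D x, P_G hSP _ hxP, ?_, ?_⟩
      · exact hx0.trans_le (hM.mono hxP.1 (le_G hSP (by omega) hxP))
      · refine le_trans ?_ hDD
        have hk2 : (k : ℝ) = 2 * (A : ℝ) ^ 2 := by rw [hk]; push_cast; ring
        rw [hk2]
        have e1 : (A : ℝ) * M (D x) ≤ A * (A * M x) := mul_le_mul_of_nonneg_left h.le hA0.le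
        have e2 : (2 * (A : ℝ) ^ 2 + 1) * (1 / 2 * M x) ≤ (2 * (A : ℝ) ^ 2 + 1) * M ((S ^ k) x) :=
          mul_le_mul_of_nonneg_left hSx (by positivity)
        nlinarith
  set L := k' * (k + 1) with hL
  have hLk : k + 1 ≤ L := by rw [hL]; nlinarith
  set z := G S L y with hz
  have hzP : P z := P_G hSP _ hyP
  have hzy : A * M y ≤ M z := hy.trans (hM.mono (P_G hSP _ hyP).1 (G_mono hSP hLk hyP))
  have hz0 : 0 < M z := lt_of_lt_of_le (by positivity) hzy
  have hSL : M ((S ^ L) y) ≤ M y := by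
    have : ∀ i, M ((S ^ (k' * i)) y) ≤ M y := by
      intro i
      induction i with
      | zero => simp
      | succ i ih =>
        rw [Nat.mul_succ, add_comm, pow_add, Module.End.mul_apply]
        refine le_trans ?_ ih
        rw [hSk, inv_mul_le_iff₀ (by positivity)]
        exact hk' _ (P_pow hSP _ hyP)
    exact this _
  have hd : M (z - S z) ≤ 2 * M y := by
    rw [hz, G_sub]
    refine (map_sub_le_add M _ _).trans ?_
    linarith
  refine ⟨z, hzP, hz0, ?_⟩
  have e : T 2 z - l • z = (-μ) • (z - S z) + (μ - l) • z := by
    have : T 2 z = μ • S z := by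
      rw [hS, LinearMap.smul_apply, smul_smul, mul_inv_cancel₀ hμ0.ne', one_smul]
    rw [this]; module
  rw [e]
  refine (map_add_le_add _ _ _).trans ?_
  rw [map_smul_eq_mul, Nice.smul (by linarith), norm_neg, Real.norm_eq_abs, abs_of_pos hμ0]
  have hA1 : (1 : ℝ) ≤ A := by exact_mod_cast hA0'
  have hμ3 : μ ≤ 3 := by
    have : 1 / (A : ℝ) ≤ 1 := by rw [div_le_one hA0]; exact hA1
    linarith [hμ.2]
  have hAδ : 7 / (A : ℝ) ≤ δ := by
    rw [div_lt_iff₀ hδ] at hA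
    rw [div_le_iff₀ hA0]; linarith
  have h5 : M y ≤ M z / A := by rw [le_div_iff₀ hA0]; linarith
  calc μ * M (z - S z) + (μ - l) * M z ≤ 3 * (2 * (M z / A)) + 1 / A * M z := by
        have h6 : (μ - l) ≤ 1 / A := by linarith [hμ.2]
        have h7 : μ * M (z - S z) ≤ 3 * (2 * (M z / A)) :=
          mul_le_mul hμ3 (by linarith) (apply_nonneg _ _) (by norm_num)
        have h8 := mul_le_mul_of_nonneg_right h6 hz0.le
        linarith
    _ = 7 / A * M z := by ring
    _ ≤ δ * M z := mul_le_mul_of_nonneg_right hAδ hz0.le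

end Krivine

namespace Krivine
open Filter Topology

theorem two_pow_err {M : Seminorm ℝ (ℚ →₀ ℝ)} (hM : Nice M) {l d : ℝ} (hl1 : 1 ≤ l) (hl2 : l ≤ 2)
    {y : ℚ →₀ ℝ} (h : M (T 2 y - l • y) ≤ d) (a : ℕ) :
    M (T (2 ^ a) y - l ^ a • y) ≤ a * 2 ^ a * d := by
  have hd : 0 ≤ d := (apply_nonneg _ _).trans h
  induction a with
  | zero => simp [T_one]
  | succ a ih =>
    have e : T (2 ^ (a + 1)) y - l ^ (a + 1) • y =
        T (2 ^ a) (T 2 y - l • y) + l • (T (2 ^ a) y - l ^ a • y) := by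
      rw [pow_succ 2 a, ← T_mul (by positivity) two_pos, Module.End.mul_apply, map_sub, map_smul,
        pow_succ]
      module
    rw [e]
    refine (map_add_le_add _ _ _).trans ?_
    rw [Nice.smul (by linarith)]
    have h1 := hM.T_le (n := 2 ^ a) (T 2 y - l • y)
    push_cast at h1 ⊢
    have h2 : (2 : ℝ) ^ a * M (T 2 y - l • y) ≤ 2 ^ a * d := by gcongr
    have h3 : l * M (T (2 ^ a) y - l ^ a • y) ≤ 2 * (a * 2 ^ a * d) :=
      mul_le_mul hl2 ih (apply_nonneg _ _) (by norm_num)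
    rw [pow_succ]
    nlinarith [show 0 ≤ (2 : ℝ) ^ a * d by positivity]

/-- growth of `T n` on approximate eigenvectors of `T 2` -/
theorem growth {M : Seminorm ℝ (ℚ →₀ ℝ)} (hM : Nice M) {θ : ℝ} (h0 : 0 ≤ θ) (h1 : θ ≤ 1)
    (n : ℕ) (hn : 1 ≤ n) {y : ℚ →₀ ℝ} (hy : P y) {d : ℝ}
    (hd : M (T 2 y - (2 : ℝ) ^ θ • y) ≤ d * M y) (hdn : (2 * n) ^ 2 * d ≤ 1 / 4) :
    1 / 4 * ((n : ℝ) ^ θ * M y) ≤ M (T n y) ∧ M (T n y) ≤ 3 * ((n : ℝ) ^ θ * M y) := by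
  have hn' : (1 : ℝ) ≤ n := by exact_mod_cast hn
  have hMy := apply_nonneg M y
  rcases hMy.eq_or_lt with hz | hMy0
  · have := hM.T_le (n := n) y
    have h3 := apply_nonneg M (T n y)
    rw [← hz] at this ⊢
    simp only [mul_zero] at *
    exact ⟨h3, this⟩
  have hd0 : 0 ≤ d := by
    by_contra hcon
    push Not at hcon
    have := (apply_nonneg M _).trans hd
    nlinarith
  set l : ℝ := (2 : ℝ) ^ θ with hl
  have hl1 : 1 ≤ l := Real.one_le_rpow (by norm_num) h0
  have hl2 : l ≤ 2 := by
    have := Real.rpow_le_rpow_of_exponent_le (by norm_num : (1 : ℝ) ≤ 2) h1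
    rwa [Real.rpow_one] at this
  have hlp : ∀ a : ℕ, l ^ a = ((2 ^ a : ℕ) : ℝ) ^ θ := by
    intro a
    rw [hl, ← Real.rpow_natCast, ← Real.rpow_mul (by norm_num), mul_comm, Real.rpow_mul (by norm_num)]
    push_cast
    rw [Real.rpow_natCast]
  set a := Nat.log 2 n with ha
  have ha1 : 2 ^ a ≤ n := Nat.pow_log_le_self 2 (by omega)
  have ha2 : n < 2 ^ (a + 1) := Nat.lt_pow_succ_log_self (by norm_num) n
  have err : ∀ b, b ≤ a + 1 → M (T (2 ^ b) y - l ^ b • y) ≤ 1 / 4 * M y := by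
    intro b hb
    refine (two_pow_err hM hl1 hl2 hd b).trans ?_
    have hb2 : (2 : ℝ) ^ b ≤ 2 * n := by
      have : 2 ^ b ≤ 2 * n := (Nat.pow_le_pow_right (by norm_num) hb).trans (by rw [pow_succ]; omega)
      exact_mod_cast this
    have hb1 : (b : ℝ) ≤ 2 ^ b := by exact_mod_cast Nat.lt_two_pow_self.le
    calc (b : ℝ) * 2 ^ b * (d * M y) ≤ (2 * n) * (2 * n) * (d * M y) := by gcongr; linarith
      _ = (2 * n) ^ 2 * d * M y := by ring
      _ ≤ _ := mul_le_mul_of_nonneg_right hdn hMy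
  have hn1 : 1 ≤ (n : ℝ) ^ θ := Real.one_le_rpow hn' h0
  have hla : l ^ a ≤ (n : ℝ) ^ θ := by
    rw [hlp]; exact Real.rpow_le_rpow (by positivity) (by exact_mod_cast ha1) h0
  have hla' : (n : ℝ) ^ θ ≤ 2 * l ^ a := by
    have : (n : ℝ) ^ θ ≤ l ^ (a + 1) := by
      rw [hlp]; exact Real.rpow_le_rpow (by positivity) (by exact_mod_cast ha2.le) h0
    rw [pow_succ] at this
    have : 0 < l ^ a := by positivity
    nlinarith
  constructor
  · have h2 := hM.T_mono (by positivity) ha1 hy.1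
    have h3 := err a (by omega)
    have h4 := (abs_le.1 (seminorm_abs_sub_le M (T (2 ^ a) y) (l ^ a • y))).1
    rw [Nice.smul (by positivity)] at h4
    nlinarith
  · have h2 := hM.T_mono (by omega) ha2.le hy.1
    have h3 := err (a + 1) le_rfl
    have h4 := (abs_le.1 (seminorm_abs_sub_le M (T (2 ^ (a + 1)) y) (l ^ (a + 1) • y))).2
    rw [Nice.smul (by positivity)] at h4
    have h5 : l ^ (a + 1) ≤ 2 * (n : ℝ) ^ θ := by
      rw [pow_succ]; nlinarith
    nlinarith

theorem GG_ge {S : Module.End ℝ (ℚ →₀ ℝ)} (hS : ∀ f, P f → P (S f)) (N : ℕ) {x : ℚ →₀ ℝ} (hx : P x) :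
    (N : ℝ) • (S ^ N) (G S N x) ≤ G S (2 * N) (G S N x) := by
  have h1 : G S (2 * N) (G S N x) =
      ∑ i ∈ Finset.range N, ∑ j ∈ Finset.range (2 * N), (S ^ (j + i)) x := by
    rw [G_apply, Finset.sum_comm]
    refine Finset.sum_congr rfl fun j _ => ?_
    rw [G_apply, map_sum]
    refine Finset.sum_congr rfl fun i _ => ?_
    rw [pow_add, Module.End.mul_apply]
  have h2 : (N : ℝ) • (S ^ N) (G S N x) =
      ∑ i ∈ Finset.range N, ∑ k ∈ Finset.Ico N (2 * N), (S ^ k) x := by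
    rw [Finset.sum_const, Finset.card_range, ← Nat.cast_smul_eq_nsmul ℝ]
    congr 1
    rw [G_apply, map_sum, Finset.sum_Ico_eq_sum_range]
    have : 2 * N - N = N := by omega
    rw [this]
    refine Finset.sum_congr rfl fun i _ => ?_
    rw [pow_add, Module.End.mul_apply]
  rw [h1, h2]
  refine Finset.sum_le_sum fun i hi => ?_
  rw [Finset.mem_range] at hi
  have h3 : ∑ j ∈ Finset.range (2 * N), (S ^ (j + i)) x = ∑ k ∈ Finset.Ico i (2 * N + i), (S ^ k) x := by
    rw [Finset.sum_Ico_eq_sum_range]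
    have : 2 * N + i - i = 2 * N := by omega
    rw [this]
    exact Finset.sum_congr rfl fun j _ => by rw [add_comm]
  rw [h3]
  refine Finset.sum_le_sum_of_subset_of_nonneg ?_ fun k _ _ => (P_pow hS k hx).1
  intro k hk
  rw [Finset.mem_Ico] at hk ⊢
  omega

theorem eigen_step {M : Seminorm ℝ (ℚ →₀ ℝ)} (hM : Nice M) {θ : ℝ} (h0 : 0 ≤ θ) (h1 : θ ≤ 1)
    (Q : ℕ) (hQ : 2 ≤ Q)
    (ih : ∀ δ : ℝ, 0 < δ → ∃ y, P y ∧ 0 < M y ∧ ∀ q : ℕ, 1 ≤ q → q ≤ Q →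
      M (T q y - (q : ℝ) ^ θ • y) ≤ δ * M y) (δ : ℝ) (hδ : 0 < δ) :
    ∃ y, P y ∧ 0 < M y ∧ ∀ q : ℕ, 1 ≤ q → q ≤ Q + 1 →
      M (T q y - (q : ℝ) ^ θ • y) ≤ δ * M y := by
  set q : ℕ := Q + 1 with hq
  have hq0 : 0 < q := by omega
  have hq1 : (1 : ℝ) ≤ q := by exact_mod_cast hq0
  set B : ℝ := (q : ℝ) ^ θ with hB
  have hB1 : 1 ≤ B := Real.one_le_rpow hq1 h0
  obtain ⟨N, hN⟩ : ∃ N : ℕ, 16 * B / δ < N := exists_nat_gt _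
  have hN0 : (0 : ℝ) < N := lt_of_le_of_lt (by positivity) hN
  have hN0' : 0 < N := by exact_mod_cast hN0
  set S : Module.End ℝ (ℚ →₀ ℝ) := B⁻¹ • T q with hS
  have hSP : ∀ f, P f → P (S f) := fun f hf => P_smul (by positivity) (P_T q hf)
  have hSq : ∀ f, M (S f) ≤ q * M f := by
    intro f
    rw [hS, LinearMap.smul_apply, Nice.smul (by positivity), inv_mul_le_iff₀ (by positivity)]
    refine (hM.T_le f).trans ?_
    have : 0 ≤ q * M f := mul_nonneg (by positivity) (apply_nonneg M f)
    nlinarith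
  have hSpow : ∀ k f, M ((S ^ k) f) = (((q ^ k : ℕ) : ℝ) ^ θ)⁻¹ * M (T (q ^ k) f) := by
    intro k f
    rw [hS, smul_pow, LinearMap.smul_apply, Nice.smul (by positivity), inv_pow, T_pow hq0]
    congr 2
    rw [hB, ← Real.rpow_natCast, ← Real.rpow_mul (by positivity), mul_comm, Real.rpow_mul (by positivity),
      Real.rpow_natCast]
    push_cast; rfl
  have hcomm : ∀ (p n : ℕ), 0 < p → ∀ f, T p (G S n f) - (p : ℝ) ^ θ • G S n f
      = G S n (T p f - (p : ℝ) ^ θ • f) := by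
    intro p n hp f
    have h2 : Commute (T p) S := by
      rw [hS]
      refine Commute.smul_right ?_ _
      rw [Commute, SemiconjBy, T_mul hp hq0, T_mul hq0 hp, mul_comm]
    have h3 : Commute (T p) (G S n) := by
      rw [G]
      exact Commute.sum_right _ _ _ fun i _ => h2.pow_right i
    rw [map_sub, map_smul]
    congr 1
    exact LinearMap.congr_fun h3 f
  set C1 : ℝ := N * (q : ℝ) ^ N with hC1
  set C2 : ℝ := (2 * N : ℕ) * (q : ℝ) ^ (2 * N) with hC2
  have hC1p : 0 < C1 := by positivity
  have hC2p : 0 < C2 := by positivity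
  set R : ℝ := 4 * (2 * ((q ^ (2 * N) : ℕ) : ℝ)) ^ 2 with hR
  have hRp : 0 < R := by positivity
  set δ0 : ℝ := min (δ / C2) (1 / R) with hδ0
  have hδ0p : 0 < δ0 := lt_min (by positivity) (by positivity)
  obtain ⟨x, hxP, hx0, hx⟩ := ih (δ0 / C1) (by positivity)
  set y := G S N x with hy
  have hyP : P y := P_G hSP N hxP
  have hxy : M x ≤ M y := hM.mono hxP.1 (le_G hSP hN0' hxP)
  have hy0 : 0 < M y := hx0.trans_le hxy
  have hyq : ∀ p : ℕ, 1 ≤ p → p ≤ Q → M (T p y - (p : ℝ) ^ θ • y) ≤ δ0 * M y := by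
    intro p hp hpQ
    rw [hy, hcomm p N (by omega)]
    refine (G_le_of hq1 hSq N _).trans ?_
    rw [← hC1]
    calc C1 * M (T p x - (p : ℝ) ^ θ • x) ≤ C1 * (δ0 / C1 * M x) := by
          gcongr; exact hx p hp hpQ
      _ = δ0 * M x := by field_simp
      _ ≤ δ0 * M y := by gcongr
  have hgr : ∀ k, k ≤ 2 * N → 1 / 4 * M y ≤ M ((S ^ k) y) ∧ M ((S ^ k) y) ≤ 3 * M y := by
    intro k hk
    have hqk : q ^ k ≤ q ^ (2 * N) := Nat.pow_le_pow_right hq0 hk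
    have hqk' : ((q ^ k : ℕ) : ℝ) ≤ ((q ^ (2 * N) : ℕ) : ℝ) := by exact_mod_cast hqk
    have := growth hM h0 h1 (q ^ k) (Nat.one_le_pow _ _ hq0) hyP (d := δ0)
      (by simpa using hyq 2 (by norm_num) hQ) (by
        calc (2 * ((q ^ k : ℕ) : ℝ)) ^ 2 * δ0 ≤ (2 * ((q ^ (2 * N) : ℕ) : ℝ)) ^ 2 * (1 / R) := by
              gcongr; exact min_le_right _ _
          _ = 1 / 4 := by
              have : (0 : ℝ) < ((q ^ (2 * N) : ℕ) : ℝ) := by positivity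
              rw [hR]; field_simp)
    have hpos : (0 : ℝ) < ((q ^ k : ℕ) : ℝ) ^ θ := by positivity
    rw [hSpow, inv_mul_eq_div, le_div_iff₀ hpos, div_le_iff₀ hpos]
    constructor <;> linarith [this.1, this.2]
  set z := G S (2 * N) y with hz
  have hzP : P z := P_G hSP _ hyP
  have hyz : M y ≤ M z := hM.mono hyP.1 (le_G hSP (by omega) hyP)
  have hz0 : 0 < M z := hy0.trans_le hyz
  have hNz : N * (1 / 4 * M y) ≤ M z := by
    have h2 := hM.mono (smul_nonneg hN0.le (P_pow hSP N hyP).1) (GG_ge hSP N hxP)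
    rw [Nice.smul hN0.le] at h2
    refine le_trans ?_ h2
    exact mul_le_mul_of_nonneg_left (hgr N (by omega)).1 hN0.le
  have hzS : M (z - S z) ≤ 4 * M y := by
    rw [hz, G_sub]
    refine (map_sub_le_add M _ _).trans ?_
    linarith [(hgr (2 * N) le_rfl).2]
  refine ⟨z, hzP, hz0, fun p hp hpq => ?_⟩
  rcases (by omega : p ≤ Q ∨ p = q) with hpQ | rfl
  · rw [hz, hcomm p (2 * N) (by omega)]
    refine (G_le_of hq1 hSq (2 * N) _).trans ?_
    rw [← hC2]
    calc C2 * M (T p y - (p : ℝ) ^ θ • y) ≤ C2 * (δ / C2 * M y) := by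
          have : δ0 ≤ δ / C2 := min_le_left _ _
          have h5 := hyq p hp hpQ
          have h6 := mul_le_mul_of_nonneg_right this hy0.le
          gcongr; linarith
      _ = δ * M y := by field_simp
      _ ≤ δ * M z := by gcongr
  · have e : T q z - B • z = (-B) • (z - S z) := by
      have : T q z = B • S z := by
        rw [hS, LinearMap.smul_apply, smul_smul, mul_inv_cancel₀ (by positivity), one_smul]
      rw [this]; module
    rw [← hB, e, map_smul_eq_mul, norm_neg, Real.norm_eq_abs, abs_of_pos (by positivity)]
    rw [div_lt_iff₀ hδ] at hN
    have h2 : B * M (z - S z) ≤ B * (4 * M y) := by gcongr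
    have h3 : 16 * B * M z ≤ N * δ * M z := mul_le_mul_of_nonneg_right hN.le hz0.le
    have h4 : B * (N * (1 / 4 * M y)) ≤ B * M z := by gcongr
    have h5 : N * (B * (4 * M y)) ≤ N * (δ * M z) := by nlinarith
    exact h2.trans (le_of_mul_le_mul_left h5 hN0)

theorem eigen_all {M : Seminorm ℝ (ℚ →₀ ℝ)} (hM : Nice M) : ∃ θ : ℝ, 0 ≤ θ ∧ θ ≤ 1 ∧
    ∀ (Q : ℕ) (δ : ℝ), 0 < δ → ∃ y, P y ∧ 0 < M y ∧ ∀ q : ℕ, 1 ≤ q → q ≤ Q →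
      M (T q y - (q : ℝ) ^ θ • y) ≤ δ * M y := by
  obtain ⟨l, hl1, hl2, hl⟩ := eigen_two hM
  have hθl : (2 : ℝ) ^ Real.logb 2 l = l := Real.rpow_logb (by norm_num) (by norm_num) (by linarith)
  have h0 : 0 ≤ Real.logb 2 l := Real.logb_nonneg (by norm_num) hl1
  have h1 : Real.logb 2 l ≤ 1 := by
    rw [Real.logb_le_iff_le_rpow (by norm_num) (by linarith), Real.rpow_one]; exact hl2
  refine ⟨Real.logb 2 l, h0, h1, ?_⟩
  have key : ∀ Q : ℕ, ∀ δ : ℝ, 0 < δ → ∃ y, P y ∧ 0 < M y ∧ ∀ q : ℕ, 1 ≤ q → q ≤ Q + 2 →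
      M (T q y - (q : ℝ) ^ Real.logb 2 l • y) ≤ δ * M y := by
    intro Q
    induction Q with
    | zero =>
      intro δ hδ
      obtain ⟨z, hzP, hz0, hz⟩ := hl δ hδ
      refine ⟨z, hzP, hz0, fun q hq1 hq2 => ?_⟩
      rcases (by omega : q = 1 ∨ q = 2) with rfl | rfl
      · simp [T_one]; positivity
      · push_cast; rw [hθl]; exact hz
    | succ Q ih =>
      intro δ hδ
      exact eigen_step hM h0 h1 (Q + 2) (by omega) ih δ hδ
  intro Q δ hδ
  obtain ⟨y, hyP, hy0, hy⟩ := key Q δ hδ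
  exact ⟨y, hyP, hy0, fun q hq1 hq2 => hy q hq1 (by omega)⟩

end Krivine

namespace Krivine
open Filter Topology

/-- translates -/
noncomputable def tr (j : ℕ) : (ℚ →₀ ℝ) →ₗ[ℝ] (ℚ →₀ ℝ) := Finsupp.lmapDomain ℝ ℝ (fun r : ℚ => r + j)

theorem tr_apply (j : ℕ) (f : ℚ →₀ ℝ) : tr j f = f.mapDomain (fun r : ℚ => r + j) := rfl

theorem tr_norm {M : Seminorm ℝ (ℚ →₀ ℝ)} (hM : Nice M) (j : ℕ) (f : ℚ →₀ ℝ) : M (tr j f) = M f :=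
  hM.spr f _ fun a _ b _ h => by simpa using h

theorem tr_support {f : ℚ →₀ ℝ} (hf : P f) (j : ℕ) (r : ℚ) (h : tr j f r ≠ 0) :
    (j : ℚ) ≤ r ∧ r < j + 1 := by
  classical
  have h1 : r ∈ (f.mapDomain (fun r : ℚ => r + j)).support := by
    rw [Finsupp.mem_support_iff]; exact h
  obtain ⟨s, hs, rfl⟩ := Finset.mem_image.1 (Finsupp.mapDomain_support h1)
  have := hf.2 s hs
  constructor <;> linarith [this.1, this.2]

theorem tr_unique {f : ℚ →₀ ℝ} (hf : P f) {j j' : ℕ} {r : ℚ} (h : tr j f r ≠ 0) (h' : tr j' f r ≠ 0) :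
    j = j' := by
  have h1 := tr_support hf j r h
  have h2 := tr_support hf j' r h'
  have h3 : (j : ℚ) < j' + 1 := by linarith
  have h4 : (j' : ℚ) < j + 1 := by linarith
  have h3' : j < j' + 1 := by exact_mod_cast h3
  have h4' : j' < j + 1 := by exact_mod_cast h4
  omega

theorem coef_mono {M : Seminorm ℝ (ℚ →₀ ℝ)} (hM : Nice M) {f : ℚ →₀ ℝ} (hf : P f) {n : ℕ}
    (c d : Fin n → ℝ) (h : ∀ j, |c j| ≤ |d j|) :
    coef M (fun j : Fin n => tr j f) c ≤ coef M (fun j : Fin n => tr j f) d := by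
  rw [coef_apply, coef_apply]
  apply hM.lat
  intro r
  simp only [Finsupp.finsetSum_apply, Finsupp.smul_apply, smul_eq_mul]
  by_cases hex : ∃ j : Fin n, tr j f r ≠ 0
  · obtain ⟨j, hj⟩ := hex
    have : ∀ e : Fin n → ℝ, ∑ i, e i * tr i f r = e j * tr j f r := by
      intro e
      refine Finset.sum_eq_single j (fun i _ hij => ?_) (by simp)
      by_contra hcon
      exact hij (Fin.ext (tr_unique hf (right_ne_zero_of_mul hcon) hj))
    rw [this, this, abs_mul, abs_mul]
    exact mul_le_mul_of_nonneg_right (h j) (abs_nonneg _)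
  · push Not at hex
    simp [hex]

theorem glue {M : Seminorm ℝ (ℚ →₀ ℝ)} (hM : Nice M) {f : ℚ →₀ ℝ} (hf : P f) (n : ℕ) (a : ℕ → ℕ)
    (ha : ∀ j, 0 < a j) (hn : 0 < n) :
    M (∑ j ∈ Finset.range n, tr j (T (a j) f)) = M (T (∑ j ∈ Finset.range n, a j) f) := by
  classical
  set s : ℕ → ℕ := fun j => ∑ i ∈ Finset.range j, a i with hs
  have hsn : 0 < s n := by
    rw [hs]; exact Finset.sum_pos (fun i _ => ha i) ⟨0, by simpa using hn⟩
  have hsn' : (0 : ℚ) < s n := by exact_mod_cast hsn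
  set F : ℕ × ℕ × ℚ →₀ ℝ := ∑ j ∈ Finset.range n, ∑ i ∈ Finset.range (a j),
    f.mapDomain (fun r => (j, i, r)) with hF
  have key : ∀ (E : ℕ → (ℚ →₀ ℝ)) (n : ℕ), ∑ j ∈ Finset.range n, ∑ i ∈ Finset.range (a j), E (s j + i)
      = ∑ k ∈ Finset.range (s n), E k := by
    intro E n
    induction n with
    | zero => simp [hs]
    | succ n ih =>
      have : s (n + 1) = s n + a n := by simp [hs, Finset.sum_range_succ]
      rw [Finset.sum_range_succ, ih, this, Finset.sum_range_add]
  have hU : T (s n) f = F.mapDomain (fun p => (p.2.2 + ((s p.1 + p.2.1 : ℕ) : ℚ)) / s n) := by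
    rw [T_apply, ← key, hF]
    simp only [Finsupp.mapDomain_finsetSum, ← Finsupp.mapDomain_comp]
    rfl
  have hV : ∑ j ∈ Finset.range n, tr j (T (a j) f) =
      F.mapDomain (fun p => (p.2.2 + (p.2.1 : ℚ)) / a p.1 + p.1) := by
    rw [hF]
    simp only [Finsupp.mapDomain_finsetSum, ← Finsupp.mapDomain_comp, T_apply, tr_apply]
    rfl
  have hsupp : ∀ p ∈ F.support, p.2.1 < a p.1 ∧ 0 ≤ p.2.2 ∧ p.2.2 < 1 := by
    intro p hp
    rw [hF] at hp
    obtain ⟨j, hj, hp⟩ := Finset.mem_biUnion.1 (Finsupp.support_finsetSum hp)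
    obtain ⟨i, hi, hp⟩ := Finset.mem_biUnion.1 (Finsupp.support_finsetSum hp)
    obtain ⟨r, hr, rfl⟩ := Finset.mem_image.1 (Finsupp.mapDomain_support hp)
    exact ⟨Finset.mem_range.1 hi, hf.2 r hr⟩
  have hs_mono : ∀ j j', j < j' → s j + a j ≤ s j' := by
    intro j j' h
    have : s j + a j = s (j + 1) := by simp [hs, Finset.sum_range_succ]
    rw [this]
    exact Finset.sum_le_sum_of_subset (Finset.range_mono h)
  have hUlt : ∀ p ∈ F.support, ∀ p' ∈ F.support, p.1 < p'.1 →
      (p.2.2 + ((s p.1 + p.2.1 : ℕ) : ℚ)) / s n < (p'.2.2 + ((s p'.1 + p'.2.1 : ℕ) : ℚ)) / s n := by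
    intro p hp p' hp' h
    apply div_lt_div_of_pos_right _ hsn'
    have h1 := hsupp p hp
    have h2 := hsupp p' hp'
    have h3 := hs_mono _ _ h
    have h4 : s p.1 + p.2.1 + 1 ≤ s p'.1 + p'.2.1 := by omega
    have h5 : ((s p.1 + p.2.1 : ℕ) : ℚ) + 1 ≤ ((s p'.1 + p'.2.1 : ℕ) : ℚ) := by exact_mod_cast h4
    linarith [h1.2.2, h2.2.1]
  rw [hU, hV]
  symm
  apply spr2 hM.spr
  · intro p hp p' hp' h
    rcases lt_trichotomy p.1 p'.1 with h1 | h1 | h1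
    · have hp1 := hsupp p hp
      have hp2 := hsupp p' hp'
      have ha1 : (0 : ℚ) < a p.1 := by exact_mod_cast ha p.1
      have ha2 : (0 : ℚ) < a p'.1 := by exact_mod_cast ha p'.1
      have e1 : (p.2.2 + (p.2.1 : ℚ)) / a p.1 < 1 := by
        rw [div_lt_one ha1]
        have : (p.2.1 : ℚ) + 1 ≤ a p.1 := by exact_mod_cast hp1.1
        linarith [hp1.2.2]
      have e2 : 0 ≤ (p'.2.2 + (p'.2.1 : ℚ)) / a p'.1 := by
        have := hp2.2.1; positivity
      have e3 : (p.1 : ℚ) + 1 ≤ p'.1 := by exact_mod_cast h1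
      linarith
    · rw [h1] at h ⊢
      have ha2 : (0 : ℚ) < a p'.1 := by exact_mod_cast ha p'.1
      rw [div_lt_div_iff_of_pos_right hsn'] at h
      push_cast at h
      have := div_lt_div_of_pos_right (by linarith : p.2.2 + (p.2.1 : ℚ) < p'.2.2 + (p'.2.1 : ℚ)) ha2
      linarith
    · exact absurd h (hUlt p' hp' p hp h1).not_gt
  · intro p hp p' hp' h
    rcases lt_trichotomy p.1 p'.1 with h1 | h1 | h1
    · exact absurd h (hUlt p hp p' hp' h1).ne
    · rw [h1] at h ⊢
      rw [div_left_inj' hsn'.ne'] at h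
      push_cast at h
      have : p.2.2 + (p.2.1 : ℚ) = p'.2.2 + (p'.2.1 : ℚ) := by linarith
      rw [this]
    · exact absurd h.symm (hUlt p' hp' p hp h1).ne

theorem ell_characterize {n : ℕ} (hn : 0 < n) {θ : ℝ} (h0 : 0 ≤ θ) (S : Seminorm ℝ (Fin n → ℝ))
    (hmono : ∀ c d : Fin n → ℝ, (∀ j, |c j| ≤ |d j|) → S c ≤ S d)
    (hone : ∀ j, S (Pi.single j 1) = 1)
    (hS : ∀ a : ℕ → ℕ, (∀ j, 0 < a j) → S (fun j => (a j : ℝ) ^ θ) = ((∑ j ∈ Finset.range n, a j : ℕ) : ℝ) ^ θ)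
    (c : Fin n → ℝ) : S c = ell θ c := by
  rcases h0.eq_or_lt with hθ | hθ
  · subst hθ
    rw [ell_zero]
    apply le_antisymm
    · have h1 := hS (fun _ => 1) (fun _ => one_pos)
      simp only [Real.rpow_zero] at h1
      have h2 := hmono c (‖c‖ • fun _ => 1) (fun j => by simpa using norm_le_pi_norm c j)
      rwa [map_smul_eq_mul, h1, norm_norm, mul_one] at h2
    · rw [pi_norm_le_iff_of_nonneg (apply_nonneg _ _)]
      intro j
      have h1 := hmono (c j • Pi.single j 1) c (fun i => by
        by_cases h : i = j
        · subst h; simp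
        · simp [h])
      rwa [map_smul_eq_mul, hone, mul_one] at h1
  · have habs : S c = S (fun j => |c j|) :=
      le_antisymm (hmono _ _ fun j => by simp) (hmono _ _ fun j => by simp)
    rw [habs, ell_pos_def hθ]
    set e : Fin n → ℝ := fun j => |c j| ^ (1 / θ) with he
    have he0 : ∀ j, 0 ≤ e j := fun j => by positivity
    set cc : ℕ → ℝ := fun j => if h : j < n then e ⟨j, h⟩ else 0 with hcc
    have hcc0 : ∀ j, 0 ≤ cc j := fun j => by simp only [hcc]; split_ifs; exacts [he0 _, le_rfl]
    have hccj : ∀ j : Fin n, cc j = e j := fun j => by simp [hcc]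
    set a : ℕ → ℕ → ℕ := fun k j => ⌊cc j * k⌋₊ + 1 with ha
    have hlim : ∀ j, Tendsto (fun k : ℕ => (a k j : ℝ) / k) atTop (𝓝 (cc j)) := by
      intro j
      have h1 := (tendsto_nat_floor_mul_div_atTop (hcc0 j)).comp (tendsto_natCast_atTop_atTop (R := ℝ))
      have h2 := h1.add tendsto_one_div_atTop_nhds_zero_nat
      rw [add_zero] at h2
      refine h2.congr fun k => ?_
      simp only [ha, Function.comp_apply]
      push_cast
      rw [add_div]
    have hSk : ∀ k : ℕ, S (fun j => ((a k j : ℝ) / k) ^ θ) =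
        (∑ j ∈ Finset.range n, (a k j : ℝ) / k) ^ θ := by
      intro k
      have h1 := hS (a k) (fun j => Nat.succ_pos _)
      have h2 : (fun j : Fin n => ((a k j : ℝ) / k) ^ θ) =
          ((k : ℝ) ^ θ)⁻¹ • (fun j : Fin n => (a k j : ℝ) ^ θ) := by
        ext j
        rw [Pi.smul_apply, smul_eq_mul, Real.div_rpow (by positivity) (by positivity)]
        ring
      rw [h2, map_smul_eq_mul, h1, Real.norm_eq_abs, abs_of_nonneg (by positivity), ← Finset.sum_div,
        Real.div_rpow (by positivity) (by positivity)]
      push_cast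
      ring
    have hL : Tendsto (fun k : ℕ => S (fun j => ((a k j : ℝ) / k) ^ θ)) atTop (𝓝 (S fun j => |c j|)) := by
      have h1 : Tendsto (fun k : ℕ => (fun j : Fin n => ((a k j : ℝ) / k) ^ θ)) atTop
          (𝓝 (fun j => |c j|)) := by
        rw [tendsto_pi_nhds]
        intro j
        have h2 := (hlim j).rpow_const (Or.inr hθ.le : cc j ≠ 0 ∨ 0 ≤ θ)
        rwa [hccj, he, ← Real.rpow_mul (abs_nonneg _), one_div_mul_cancel hθ.ne', Real.rpow_one] at h2
      rw [tendsto_iff_norm_sub_tendsto_zero] at h1 ⊢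
      have h3 := h1.const_mul (∑ j, S (Pi.single j 1))
      rw [mul_zero] at h3
      refine squeeze_zero (fun _ => norm_nonneg _) (fun k => ?_) h3
      exact (seminorm_abs_sub_le S _ _).trans (seminorm_fin_le S _)
    have hR : Tendsto (fun k : ℕ => (∑ j ∈ Finset.range n, (a k j : ℝ) / k) ^ θ) atTop
        (𝓝 ((∑ j ∈ Finset.range n, cc j) ^ θ)) :=
      (tendsto_finsetSum _ fun j _ => hlim j).rpow_const (Or.inr hθ.le)
    have := tendsto_nhds_unique (hL.congr hSk) hR
    rw [this, Finset.sum_range]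
    simp only [hccj, he]

theorem lemberg {M : Seminorm ℝ (ℚ →₀ ℝ)} (hM : Nice M) : ∃ θ : ℝ, 0 ≤ θ ∧ θ ≤ 1 ∧ Kr M θ := by
  obtain ⟨θ, h0, h1, h⟩ := eigen_all hM
  refine ⟨θ, h0, h1, fun n η hη => ?_⟩
  rcases Nat.eq_zero_or_pos n with rfl | hn
  · refine ⟨fun _ => 0, fun j => j.elim0, fun c => ?_⟩
    have : ell θ c = 0 := by
      have h2 := ell_smul h0 0 c
      rw [abs_zero, zero_mul] at h2
      rw [← h2]; congr 1; exact Subsingleton.elim _ _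
    simp [this]
  have hex : ∀ k : ℕ, ∃ u, P u ∧ M u = 1 ∧ ∀ q : ℕ, 1 ≤ q → q ≤ k →
      M (T q u - (q : ℝ) ^ θ • u) ≤ 1 / ((k : ℝ) + 1) := by
    intro k
    obtain ⟨y, hyP, hy0, hy⟩ := h k (1 / ((k : ℝ) + 1)) (by positivity)
    refine ⟨(M y)⁻¹ • y, P_smul (by positivity) hyP, ?_, fun q hq1 hq2 => ?_⟩
    · rw [Nice.smul (by positivity), inv_mul_cancel₀ hy0.ne']
    · rw [map_smul, smul_comm, ← smul_sub, Nice.smul (by positivity), inv_mul_le_iff₀ hy0, mul_comm]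
      exact hy q hq1 hq2
  choose u huP hu1 hu using hex
  set s : ℕ → Seminorm ℝ (Fin n → ℝ) := fun k => coef M (fun j : Fin n => tr j (u k)) with hs
  have hbd : ∀ v, ∃ C, ∀ᶠ k in (hyperfilter ℕ : Filter ℕ), s k v ≤ C := by
    intro v
    refine ⟨∑ j, |v j|, Eventually.of_forall fun k => ?_⟩
    rw [hs, coef_apply]
    refine (seminorm_sum_le _ _ _).trans (Finset.sum_le_sum fun j _ => ?_)
    rw [map_smul_eq_mul, tr_norm hM, hu1, mul_one, Real.norm_eq_abs]
  set S := ulim (hyperfilter ℕ) s with hS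
  have ht : ∀ v, Tendsto (fun k => s k v) (hyperfilter ℕ : Filter ℕ) (𝓝 (S v)) :=
    fun v => tendsto_ulim (hyperfilter ℕ) s hbd v
  have hSell : ∀ c, S c = ell θ c := by
    apply ell_characterize hn h0
    · intro c d hcd
      exact le_of_tendsto_of_tendsto' (ht c) (ht d) fun k => coef_mono hM (huP k) c d hcd
    · intro j
      refine tendsto_nhds_unique (ht _) ?_
      have : ∀ k, s k (Pi.single j 1) = 1 := by
        intro k
        rw [hs, coef_apply, Finset.sum_eq_single j]
        · rw [Pi.single_eq_same, one_smul, tr_norm hM, hu1]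
        · intro i _ hij; simp [hij]
        · simp
      simp only [this]
      exact tendsto_const_nhds
    · intro a ha
      refine tendsto_nhds_unique (ht _) ?_
      set N := ∑ j ∈ Finset.range n, a j with hN
      have haN : ∀ j ∈ Finset.range n, a j ≤ N := fun j hj =>
        Finset.single_le_sum (fun _ _ => Nat.zero_le _) hj
      have hN0 : 1 ≤ N := (ha 0).trans_le (haN 0 (by simpa using hn))
      have h2 : ∀ᶠ k in (hyperfilter ℕ : Filter ℕ),
          ‖s k (fun j => (a j : ℝ) ^ θ) - (N : ℝ) ^ θ‖ ≤ (n + 1) * (1 / ((k : ℝ) + 1)) := by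
        filter_upwards [Nat.hyperfilter_le_atTop (eventually_ge_atTop N)] with k hk
        have e1 : s k (fun j => (a j : ℝ) ^ θ) =
            M (∑ j ∈ Finset.range n, (a j : ℝ) ^ θ • tr j (u k)) := by
          rw [hs, coef_apply, Finset.sum_range]
        have e2 := seminorm_abs_sub_le M (∑ j ∈ Finset.range n, (a j : ℝ) ^ θ • tr j (u k))
          (∑ j ∈ Finset.range n, tr j (T (a j) (u k)))
        have e3 : M ((∑ j ∈ Finset.range n, (a j : ℝ) ^ θ • tr j (u k)) -
            ∑ j ∈ Finset.range n, tr j (T (a j) (u k))) ≤ n * (1 / ((k : ℝ) + 1)) := by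
          rw [← Finset.sum_sub_distrib]
          refine (seminorm_sum_le _ _ _).trans ?_
          calc _ ≤ ∑ j ∈ Finset.range n, 1 / ((k : ℝ) + 1) := by
                refine Finset.sum_le_sum fun j hj => ?_
                rw [← map_smul, ← map_sub, tr_norm hM, map_sub_rev]
                exact hu k (a j) (ha j) ((haN j hj).trans hk)
            _ = _ := by simp
        rw [glue hM (huP k) n a ha hn, ← hN] at e2
        have e4 := seminorm_abs_sub_le M (T N (u k)) ((N : ℝ) ^ θ • u k)
        rw [Nice.smul (by positivity), hu1, mul_one] at e4
        have e5 := hu k N hN0 hk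
        rw [e1, Real.norm_eq_abs]
        refine (abs_sub_le _ (M (T N (u k))) _).trans ?_
        rw [add_mul, one_mul]
        linarith
      have h3 : Tendsto (fun k : ℕ => ((n : ℝ) + 1) * (1 / ((k : ℝ) + 1))) (hyperfilter ℕ : Filter ℕ)
          (𝓝 0) := by
        have := (tendsto_one_div_add_atTop_nhds_zero_nat (𝕜 := ℝ)).const_mul ((n : ℝ) + 1)
        rw [mul_zero] at this
        exact this.mono_left Nat.hyperfilter_le_atTop
      rw [tendsto_iff_norm_sub_tendsto_zero]
      exact squeeze_zero' (Eventually.of_forall fun _ => norm_nonneg _) h2 h3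
  obtain ⟨k, hk⟩ := (transfer (hyperfilter ℕ : Filter ℕ) s S ht η hη).exists
  refine ⟨fun j : Fin n => tr j (u k), ?_, fun c => ?_⟩
  · intro j j' hj r hr r' hr'
    rw [Finsupp.mem_support_iff] at hr hr'
    have e1 := tr_support (huP k) _ _ hr
    have e2 := tr_support (huP k) _ _ hr'
    have : ((j : ℕ) : ℚ) + 1 ≤ (j' : ℕ) := by exact_mod_cast hj
    linarith [e1.2, e2.1]
  · have e1 := hk c
    rw [hSell, hs, coef_apply] at e1
    exact e1.trans (mul_le_mul_of_nonneg_left (norm_le_ell h0 c) hη.le)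

/-- Krivine's theorem for seminorms on finitely supported sequences -/
theorem krivine (N : Seminorm ℝ (ℕ →₀ ℝ)) (hN : ∀ i, N (Finsupp.single i 1) = 1)
    (K : ℝ) (hK : 1 ≤ K)
    (hd : ∀ i j, i < j → 1 ≤ K * N (Finsupp.single i 1 - Finsupp.single j 1)) :
    ∃ θ : ℝ, 0 ≤ θ ∧ θ ≤ 1 ∧ Kr N θ := by
  obtain ⟨F, hF, hF0, hFK⟩ := spr_step N hN K hK hd
  obtain ⟨M0, hM0, h0, hsup, hK0⟩ := d_step hF hF0
  obtain ⟨M, hM, h1, hlat, hK1⟩ := sign_step hM0 h0 hsup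
  obtain ⟨θ, hθ0, hθ1, hKr⟩ := lemberg (M := M) ⟨hM, h1, hlat⟩
  exact ⟨θ, hθ0, hθ1, hFK θ hθ0 (hK0 θ (hK1 θ hθ0 hKr))⟩

end Krivine

namespace Krivine
open Filter Topology

theorem main_sem (K : ℝ) (hK : 1 ≤ K) (n : ℕ) (ε : ℝ) (hε : 0 < ε) :
    ∃ (m : ℕ) (Th : Finset ℝ), (∀ θ ∈ Th, 0 ≤ θ ∧ θ ≤ 1) ∧
      ∀ N : Seminorm ℝ (ℕ →₀ ℝ), (∀ i < m, N (Finsupp.single i 1) = 1) →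
      (∀ (a : ℕ → ℝ) (k : ℕ), k ≤ m → N (∑ i ∈ Finset.range k, Finsupp.single i (a i)) ≤
        K * N (∑ i ∈ Finset.range m, Finsupp.single i (a i))) →
      ∃ θ ∈ Th, ∃ y : Fin n → (ℕ →₀ ℝ), Succ y ∧ (∀ j, ∀ i ∈ (y j).support, i < m) ∧
        ∀ c : Fin n → ℝ, ell θ c ≤ N (∑ j, c j • y j) ∧ N (∑ j, c j • y j) ≤ (1 + ε) * ell θ c := by
  set η : ℝ := min ε 1 / 20 with hη
  have hη0 : 0 < η := by have : 0 < min ε 1 := lt_min hε one_pos; positivity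
  have hη1 : η ≤ 1 / 20 := by have := min_le_right ε 1; linarith
  have hηε : 20 * η ≤ ε := by have := min_le_left ε 1; linarith
  obtain ⟨Th, hTh, hnet⟩ := exists_net n η hη0
  by_contra hcon
  push Not at hcon
  have hcon' := fun m => hcon m Th hTh
  choose N hN1 hN2 hN3 using hcon'
  have hgt : ∀ b : ℕ, ∀ᶠ m in (hyperfilter ℕ : Filter ℕ), b < m := fun b =>
    Nat.hyperfilter_le_atTop (eventually_gt_atTop b)
  have hsup : ∀ v : ℕ →₀ ℝ, ∃ b : ℕ, ∀ i ∈ v.support, i ≤ b := fun v =>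
    ⟨v.support.sup id, fun i hi => Finset.le_sup (f := id) hi⟩
  have hbd : ∀ v, ∃ C, ∀ᶠ m in (hyperfilter ℕ : Filter ℕ), N m v ≤ C := by
    intro v
    obtain ⟨b, hb⟩ := hsup v
    refine ⟨∑ i ∈ v.support, |v i|, ?_⟩
    filter_upwards [hgt b] with m hm
    have e : v = ∑ i ∈ v.support, v i • Finsupp.single i (1 : ℝ) := by
      conv_lhs => rw [← Finsupp.sum_single v]
      simp [Finsupp.sum]
    conv_lhs => rw [e]
    refine (seminorm_sum_le _ _ _).trans (Finset.sum_le_sum fun i hi => ?_)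
    rw [map_smul_eq_mul, hN1 m i ((hb i hi).trans_lt hm), mul_one, Real.norm_eq_abs]
  set L := ulim (hyperfilter ℕ) N with hL
  have ht : ∀ v, Tendsto (fun k => N k v) (hyperfilter ℕ : Filter ℕ) (𝓝 (L v)) :=
    fun v => tendsto_ulim (hyperfilter ℕ) N hbd v
  obtain ⟨θ, h0, h1, hKr⟩ := krivine L (by
    intro i
    refine tendsto_nhds_unique (ht _) ?_
    refine tendsto_const_nhds.congr' ?_
    filter_upwards [hgt i] with m hm
    exact (hN1 m i hm).symm) K hK (by
    intro i j hij
    refine ge_of_tendsto ((ht _).const_mul K) ?_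
    filter_upwards [hgt j] with m hm
    have h2 := hN2 m (fun t => if t = i then 1 else if t = j then -1 else 0) (i + 1) (by omega)
    have e1 : ∑ t ∈ Finset.range (i + 1), Finsupp.single t
        ((fun t => if t = i then (1 : ℝ) else if t = j then -1 else 0) t) = Finsupp.single i 1 := by
      rw [Finset.sum_eq_single i]
      · simp
      · intro t ht hti
        rw [Finset.mem_range] at ht
        simp only [if_neg hti]
        rw [if_neg (by omega), Finsupp.single_zero]
      · simp
    have e2 : ∑ t ∈ Finset.range m, Finsupp.single t
        ((fun t => if t = i then (1 : ℝ) else if t = j then -1 else 0) t)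
        = Finsupp.single i 1 - Finsupp.single j 1 := by
      rw [← Finset.sum_subset (s₁ := {i, j})]
      · rw [Finset.sum_pair hij.ne]
        simp [hij.ne', sub_eq_add_neg, Finsupp.single_neg]
      · intro t ht
        simp only [Finset.mem_insert, Finset.mem_singleton] at ht
        rw [Finset.mem_range]; omega
      · intro t _ ht
        simp only [Finset.mem_insert, Finset.mem_singleton, not_or] at ht
        simp [ht.1, ht.2]
    rw [e1, e2, hN1 m i (by omega)] at h2
    exact h2)
  obtain ⟨θ', hθ', hell⟩ := hnet θ h0 h1
  obtain ⟨y, hy, hyc⟩ := Kr_transfer L h0 hKr n η hη0 N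
  have hev := hyc (hyperfilter ℕ : Filter ℕ) (fun _ => LinearMap.id) (fun c => ht _)
  choose b hb using fun j => hsup (y j)
  obtain ⟨m, hm1, hm2⟩ := (hev.and (hgt (Finset.univ.sup b))).exists
  have h1η : 0 < 1 - η := by linarith
  obtain ⟨c, hc⟩ := hN3 m θ' hθ' (fun j => (1 - η)⁻¹ • y j) (by
      intro j j' hj a ha a' ha'
      exact hy j j' hj a (Finsupp.support_smul ha) a' (Finsupp.support_smul ha')) (by
      intro j i hi
      exact ((hb j i (Finsupp.support_smul hi)).trans (Finset.le_sup (Finset.mem_univ j))).trans_lt hm2)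
  have hm := hm1 c
  simp only [LinearMap.id_apply] at hm
  have e : ∑ j, c j • (1 - η)⁻¹ • y j = (1 - η)⁻¹ • ∑ j, c j • y j := by
    rw [Finset.smul_sum]
    exact Finset.sum_congr rfl fun j _ => smul_comm _ _ _
  rw [e, map_smul_eq_mul, Real.norm_eq_abs, abs_of_pos (by positivity)] at hc
  set V := N m (∑ j, c j • y j) with hV
  have hl := hell c
  have hl0 := ell_nonneg θ' c
  rw [abs_le] at hm
  have hlow : ell θ' c ≤ (1 - η)⁻¹ * V := by
    rw [inv_mul_eq_div, le_div_iff₀ h1η]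
    nlinarith [hm.1, hl.1]
  have hc' := hc hlow
  rw [inv_mul_eq_div, lt_div_iff₀ h1η] at hc'
  have hup : V ≤ (1 + η) * ((1 + η) * ell θ' c) := by nlinarith [hm.2, hl.2]
  have h20 : (1 + η) * (1 + η) ≤ (1 + ε) * (1 - η) := by nlinarith
  nlinarith

theorem blocks {n m : ℕ} (y : Fin n → (ℕ →₀ ℝ)) (hy : Succ y) (hm : ∀ j, ∀ i ∈ (y j).support, i < m)
    (hne : ∀ j, y j ≠ 0) : ∃ q : Fin (n + 1) → ℕ, StrictMono q ∧ q (Fin.last n) ≤ m ∧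
      ∃ b : ℕ → ℝ, ∀ (X : Type) [AddCommGroup X] [Module ℝ X] (x : ℕ → X) (j : Fin n),
        ∑ i ∈ Finset.Ico (q j.castSucc) (q j.succ), b i • x i = Finsupp.linearCombination ℝ x (y j) := by
  classical
  set q : Fin (n + 1) → ℕ := fun t => (Finset.univ.filter fun j : Fin n => j.castSucc < t).sup
    fun j => (y j).support.sup fun i => i + 1 with hq
  have hlo : ∀ j, ∀ i ∈ (y j).support, q j.castSucc ≤ i := by
    intro j i hi
    refine Finset.sup_le fun j' hj' => Finset.sup_le fun a ha => ?_
    rw [Finset.mem_filter] at hj'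
    exact hy j' j (by simpa using hj'.2) a ha i hi
  have hhi : ∀ j, ∀ i ∈ (y j).support, i < q j.succ := by
    intro j i hi
    have h1 : i + 1 ≤ (y j).support.sup fun i => i + 1 := Finset.le_sup (f := fun i => i + 1) hi
    have h2 : (y j).support.sup (fun i => i + 1) ≤ q j.succ :=
      Finset.le_sup (f := fun j => (y j).support.sup fun i => i + 1)
        (by rw [Finset.mem_filter]; exact ⟨Finset.mem_univ _, Fin.castSucc_lt_succ⟩)
    omega
  have hmono : StrictMono q := by
    rw [Fin.strictMono_iff_lt_succ]
    intro j
    obtain ⟨i, hi⟩ := Finsupp.support_nonempty_iff.2 (hne j)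
    exact (hlo j i hi).trans_lt (hhi j i hi)
  refine ⟨q, hmono, ?_, fun i => ∑ j, y j i, ?_⟩
  · refine Finset.sup_le fun j _ => Finset.sup_le fun a ha => hm j a ha
  · intro X _ _ x j
    rw [Finsupp.linearCombination_apply, Finsupp.sum_of_support_subset (s := Finset.Ico (q j.castSucc) (q j.succ))]
    · refine Finset.sum_congr rfl fun i hi => ?_
      rw [Finset.mem_Ico] at hi
      congr 1
      refine Finset.sum_eq_single j (fun j' _ hj' => ?_) (by simp)
      by_contra hne'
      have hi' : i ∈ (y j').support := by rw [Finsupp.mem_support_iff]; exact hne'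
      have h1 := hlo j' i hi'
      have h2 := hhi j' i hi'
      rcases lt_or_gt_of_ne hj' with h | h
      · have : q j'.succ ≤ q j.castSucc := hmono.monotone (Fin.succ_le_castSucc_iff.2 h)
        omega
      · have : q j.succ ≤ q j'.castSucc := hmono.monotone (Fin.succ_le_castSucc_iff.2 h)
        omega
    · intro i hi
      rw [Finset.mem_Ico]
      exact ⟨hlo j i hi, hhi j i hi⟩
    · intro i _; simp

end Krivine

theorem uniform_krivine (K : ℝ) (hK : 1 ≤ K) (n : ℕ) (ε : ℝ) (hε : 0 < ε) :
    ∃ (m : ℕ) (I : Finset ℝ≥0∞), (∀ p ∈ I, 1 ≤ p) ∧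
      ∀ (X : Type) [NormedAddCommGroup X] [NormedSpace ℝ X] [CompleteSpace X]
        (x : ℕ → X),
        (∀ i < m, ‖x i‖ = 1) →
        (∀ (a : ℕ → ℝ) (k : ℕ), k ≤ m →
          ‖∑ i ∈ Finset.range k, a i • x i‖ ≤ K * ‖∑ i ∈ Finset.range m, a i • x i‖) →
        ∃ p ∈ I, ∃ q : Fin (n + 1) → ℕ, StrictMono q ∧ q (Fin.last n) ≤ m ∧
          ∃ b : ℕ → ℝ,
            ∀ c : Fin n → ℝ,
              lpNorm p c ≤
                  ‖∑ j : Fin n, c j •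
                    ∑ i ∈ Finset.Ico (q j.castSucc) (q j.succ), b i • x i‖ ∧
                ‖∑ j : Fin n, c j •
                    ∑ i ∈ Finset.Ico (q j.castSucc) (q j.succ), b i • x i‖ ≤
                  (1 + ε) * lpNorm p c := by
  classical
  obtain ⟨m, Th, hTh, hmain⟩ := Krivine.main_sem K hK n ε hε
  refine ⟨m, Th.image Krivine.expo, ?_, ?_⟩
  · intro p hp
    obtain ⟨θ, hθ, rfl⟩ := Finset.mem_image.1 hp
    exact Krivine.one_le_expo (hTh θ hθ).1 (hTh θ hθ).2
  · intro X _ _ _ x hx1 hx2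
    set N : Seminorm ℝ (ℕ →₀ ℝ) := (normSeminorm ℝ X).comp (Finsupp.linearCombination ℝ x) with hN
    have hNa : ∀ f, N f = ‖Finsupp.linearCombination ℝ x f‖ := fun f => rfl
    obtain ⟨θ, hθ, y, hy, hym, hyc⟩ := hmain N (by
      intro i hi; rw [hNa]; simpa using hx1 i hi) (by
      intro a k hk
      rw [hNa, hNa]
      simpa using hx2 a k hk)
    have h0 := (hTh θ hθ).1
    have hne : ∀ j, y j ≠ 0 := by
      intro j hj
      have h1 := (hyc (Pi.single j 1)).1
      have h2 := Krivine.norm_le_ell h0 (Pi.single j 1 : Fin n → ℝ)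
      have h3 : ∑ i, (Pi.single j 1 : Fin n → ℝ) i • y i = 0 := by
        rw [Finset.sum_eq_single j]
        · simp [hj]
        · intro i _ hij; simp [hij]
        · simp
      rw [h3, map_zero] at h1
      have h4 := norm_le_pi_norm (Pi.single j 1 : Fin n → ℝ) j
      rw [Pi.single_eq_same, norm_one] at h4
      linarith
    obtain ⟨q, hq, hqm, b, hb⟩ := Krivine.blocks y hy hym hne
    refine ⟨Krivine.expo θ, Finset.mem_image_of_mem _ hθ, q, hq, hqm, b, fun c => ?_⟩
    have e : ∑ j : Fin n, c j • ∑ i ∈ Finset.Ico (q j.castSucc) (q j.succ), b i • x i =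
        Finsupp.linearCombination ℝ x (∑ j, c j • y j) := by
      rw [map_sum]
      refine Finset.sum_congr rfl fun j _ => ?_
      rw [hb X x j, map_smul]
    rw [e, Krivine.lpNorm_expo h0, ← hNa]
    exact hyc c
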